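/- arXiv:math/0405433 — 2 statements merged into one kernel-verified Lean document; each statement's English description precedes it below -/
import Mathlib

section
/- Let p be a prime. For any N-tuple (i₁,…,i_N) with i_s ≥ 0 and i₁+⋯+i_N = 1, the set Bad_{ℤ_p}(i₁,…,i_N) ⊆ ℤ_p^N has Hausdorff dimension N. -/
open scoped ENNReal

open MeasureTheory

namespace BadPadic

/-- The `p`-adic box with side lengths `p ^ (-n s)` centred at `x`. -/
def box {p : ℕ} [Fact p.Prime] {N : ℕ} (n : Fin N → ℕ) (x : Fin N → ℤ_[p]) :
    Set (Fin N → ℤ_[p]) :=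
  {y | ∀ s, ‖y s - x s‖ ≤ (p : ℝ) ^ (-(n s : ℤ))}

/-- Rational points of height less than `H` with denominator prime to `p`. -/
def ratPts (p : ℕ) [Fact p.Prime] (N : ℕ) (H : ℝ) : Set (Fin N → ℤ_[p]) :=
  {P | ∃ (q : ℤ) (r : Fin N → ℤ), q ≠ 0 ∧ (∀ s, (q : ℤ_[p]) * P s = r s) ∧
    |(q : ℝ)| < H ∧ ∀ s, |(r s : ℝ)| < H}

section
variable {p : ℕ} [Fact p.Prime] {N : ℕ}

lemma norm_det_le (A : Matrix (Fin N) (Fin N) ℚ_[p]) (C : Fin N → ℝ) (hC : ∀ s, 0 ≤ C s)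
    (h : ∀ i s, ‖A i s‖ ≤ C s) : ‖A.det‖ ≤ ∏ s, C s := by
  rw [Matrix.det_apply]
  apply IsUltrametricDist.norm_sum_le_of_forall_le_of_nonneg (Finset.prod_nonneg fun s _ => hC s)
  intro σ _
  have h1 : ‖Equiv.Perm.sign σ • ∏ i, A (σ i) i‖ = ‖∏ i, A (σ i) i‖ := by
    rcases Int.units_eq_one_or (Equiv.Perm.sign σ) with h | h <;> simp [h, Units.smul_def]
  rw [h1, norm_prod]
  exact Finset.prod_le_prod (fun _ _ => norm_nonneg _) fun i _ => h _ _

lemma hyper (n : Fin N → ℕ) (H : ℝ)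
    (hH : ((N + 1).factorial : ℝ) * H ^ (N + 1) < (p : ℝ) ^ (∑ s, n s))
    (S : Set (Fin N → ℤ_[p])) (P0 : Fin N → ℤ_[p]) (hP0 : P0 ∈ S) (hS : S ⊆ ratPts p N H)
    (hρ : S ⊆ box n P0) :
    ∃ a : Fin N → ℚ_[p], a ≠ 0 ∧ ∀ P ∈ S, ∑ s, a s * ((P s : ℚ_[p]) - P0 s) = 0 := by
  have hp0 : (0:ℝ) < p := by exact_mod_cast (Fact.out : p.Prime).pos
  choose! q r hq hr hqH hrH using fun P (hP : P ∈ S) => hS hP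
  have hr' : ∀ P ∈ S, ∀ s, (q P : ℚ_[p]) * P s = r P s := by
    intro P hP s
    have := congrArg (fun z : ℤ_[p] => (z : ℚ_[p])) (hr P hP s)
    simpa using this
  let vZ : (Fin N → ℤ_[p]) → Fin (N+1) → ℤ := fun P => Fin.cons (q P) (r P)
  let v : (Fin N → ℤ_[p]) → Fin (N+1) → ℚ_[p] := fun P j => (vZ P j : ℚ_[p])
  have v0 : ∀ P, v P 0 = q P := fun P => rfl
  have vs : ∀ P s, v P (Fin.succ s) = r P s := fun P s => rfl
  have key : Submodule.span ℚ_[p] (v '' S) < ⊤ := by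
    rw [lt_top_iff_ne_top]
    intro htop
    have hex := Submodule.exists_fun_fin_finrank_span_eq ℚ_[p] (v '' S)
    have hfr : Module.finrank ℚ_[p] (Submodule.span ℚ_[p] (v '' S)) = N + 1 := by
      rw [htop]; simp
    rw [hfr] at hex
    obtain ⟨f, hf1, -, hf3⟩ := hex
    choose P hPS hPf using hf1
    let M : Matrix (Fin (N+1)) (Fin (N+1)) ℤ := fun j => vZ (P j)
    have hMf : (M.map (Int.cast : ℤ → ℚ_[p])) = f := by
      ext j t
      rw [← hPf j]; rfl
    have hdet : (M.det : ℚ_[p]) ≠ 0 := by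
      have h1 : (M.det : ℚ_[p]) = (M.map (Int.cast : ℤ → ℚ_[p])).det := by
        have := (Int.castRingHom ℚ_[p]).map_det M
        simpa using this
      rw [h1, hMf]
      have : IsUnit (Matrix.of f) := Matrix.linearIndependent_rows_iff_isUnit.1 hf3
      exact ((Matrix.isUnit_iff_isUnit_det _).1 this).ne_zero
    have hdetZ : M.det ≠ 0 := by
      intro h; rw [h] at hdet; simp at hdet
    let B : Matrix (Fin (N+1)) (Fin (N+1)) ℚ_[p] := fun j =>
      Fin.cons (q (P j) : ℚ_[p]) (fun s => (q (P j) : ℚ_[p]) * (P j s - P0 s))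
    have hBdet : (M.map (Int.cast : ℤ → ℚ_[p])).det = B.det := by
      rw [← Matrix.det_transpose, ← Matrix.det_transpose B]
      apply Matrix.det_eq_of_forall_row_eq_smul_add_const (Fin.cons 0 (fun s => (P0 s : ℚ_[p]))) 0
      · rfl
      · intro t j
        refine Fin.cases ?_ (fun s => ?_) t
        · change (q (P j) : ℚ_[p]) = (q (P j) : ℚ_[p]) + 0 * (q (P j) : ℚ_[p])
          ring
        · change (r (P j) s : ℚ_[p]) = (q (P j) : ℚ_[p]) * (P j s - P0 s) +
            (P0 s : ℚ_[p]) * (q (P j) : ℚ_[p])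
          rw [← hr' _ (hPS j)]; ring
    have hB : ‖B.det‖ ≤ (p : ℝ) ^ (-((∑ s, n s : ℕ) : ℤ)) := by
      have := norm_det_le B (Fin.cons 1 (fun s => (p : ℝ) ^ (-(n s : ℤ)))) ?_ ?_
      · refine this.trans (le_of_eq ?_)
        rw [Fin.prod_univ_succ]
        simp only [Fin.cons_zero, Fin.cons_succ, one_mul, zpow_neg, zpow_natCast, Finset.prod_inv_distrib,
          Finset.prod_pow_eq_pow_sum]
      · intro s
        refine Fin.cases ?_ (fun s => ?_) s
        · simp
        · simp only [Fin.cons_succ]; positivity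
      · intro j s
        refine Fin.cases ?_ (fun s => ?_) s
        · simp only [B, Fin.cons_zero]
          exact Padic.norm_int_le_one _
        · simp only [B, Fin.cons_succ]
          rw [norm_mul]
          have h1 := hρ (hPS j) s
          rw [PadicInt.norm_def] at h1
          have h2 : ‖(q (P j) : ℚ_[p])‖ ≤ 1 := Padic.norm_int_le_one _
          push_cast at h1
          calc _ ≤ 1 * ‖(P j s : ℚ_[p]) - P0 s‖ := by gcongr
            _ ≤ _ := by rw [one_mul]; exact h1
    have hdvd : ((p : ℤ) ^ (∑ s, n s)) ∣ M.det := by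
      rw [← Padic.norm_int_le_pow_iff_dvd]
      have h1 : (M.det : ℚ_[p]) = (M.map (Int.cast : ℤ → ℚ_[p])).det := by
        have := (Int.castRingHom ℚ_[p]).map_det M
        simpa using this
      rw [h1, hBdet]; exact hB
    have hle := Int.le_of_dvd (abs_pos.2 hdetZ) ((dvd_abs _ _).2 hdvd)
    have hle' : (p : ℝ) ^ (∑ s, n s) ≤ |(M.det : ℝ)| := by exact_mod_cast hle
    have h2 : |(M.det : ℝ)| ≤ ((N + 1).factorial : ℝ) * H ^ (N + 1) := by
      have h1 : (M.det : ℝ) = (M.map (Int.cast : ℤ → ℝ)).det := by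
        have := (Int.castRingHom ℝ).map_det M
        simpa using this
      have := Matrix.det_le (A := M.map (Int.cast : ℤ → ℝ)) (abv := AbsoluteValue.abs) (x := H) ?_
      · rw [h1]; simpa using this
      · intro j t
        refine Fin.cases ?_ (fun s => ?_) t
        · exact (hqH _ (hPS j)).le
        · exact (hrH _ (hPS j) s).le
    linarith
  obtain ⟨f, hf0, hf⟩ := Submodule.exists_le_ker_of_lt_top _ key
  have hfP : ∀ P ∈ S, f (Pi.single 0 1) + ∑ s : Fin N, f (Pi.single s.succ 1) * (P s : ℚ_[p]) = 0 := by
    intro P hP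
    have h1 : f (v P) = 0 := hf (Submodule.subset_span ⟨P, hP, rfl⟩)
    rw [LinearMap.pi_apply_eq_sum_univ f, Fin.sum_univ_succ] at h1
    have hq' : (q P : ℚ_[p]) ≠ 0 := by exact_mod_cast hq P hP
    apply mul_left_cancel₀ hq'
    rw [mul_zero, ← h1, mul_add, Finset.mul_sum]
    have e : ∀ t : Fin (N+1), (fun j => if t = j then (1:ℚ_[p]) else 0) = Pi.single t 1 := by
      intro t; ext j; simp [Pi.single_apply, eq_comm]
    simp only [e, v0, vs, smul_eq_mul]
    congr 1
    refine Finset.sum_congr rfl fun s _ => ?_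
    rw [← hr' P hP]; ring
  refine ⟨fun s => f (Pi.single s.succ 1), ?_, ?_⟩
  · intro h0
    have h0' : ∀ s : Fin N, f (Pi.single s.succ 1) = 0 := fun s => congrFun h0 s
    apply hf0
    have h2 := hfP P0 hP0
    simp only [h0', zero_mul, Finset.sum_const_zero, add_zero] at h2
    refine LinearMap.pi_ext' fun t => ?_
    ext
    refine Fin.cases ?_ (fun s => ?_) t
    · simpa using h2
    · simpa using h0' s
  · intro P hP
    have h1 := hfP P hP
    have h2 := hfP P0 hP0
    simp only [mul_sub, Finset.sum_sub_distrib]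
    linear_combination h1 - h2

lemma norm_sub_le_max' (x y : ℤ_[p]) : ‖x - y‖ ≤ max ‖x‖ ‖y‖ := by
  rw [sub_eq_add_neg, ← norm_neg y]
  exact IsUltrametricDist.norm_add_le_max _ _

lemma mem_box_self (n : Fin N → ℕ) (x : Fin N → ℤ_[p]) : x ∈ box n x := by
  intro s; simp

lemma box_symm {n : Fin N → ℕ} {x y : Fin N → ℤ_[p]} (h : y ∈ box n x) : x ∈ box n y := by
  intro s; rw [norm_sub_rev]; exact h s

lemma box_trans {n : Fin N → ℕ} {x y z : Fin N → ℤ_[p]} (h : y ∈ box n x) (h' : z ∈ box n y) :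
    z ∈ box n x := by
  intro s
  have : z s - x s = (z s - y s) + (y s - x s) := by ring
  rw [this]
  exact (IsUltrametricDist.norm_add_le_max _ _).trans (max_le (h' s) (h s))

lemma box_eq {n : Fin N → ℕ} {x y : Fin N → ℤ_[p]} (h : y ∈ box n x) : box n y = box n x :=
  Set.Subset.antisymm (fun _ hz => box_trans h hz) (fun _ hz => box_trans (box_symm h) hz)

lemma one_lt_p : (1 : ℝ) < p := by exact_mod_cast (Fact.out : p.Prime).one_lt

lemma zpow_le_zpow' {a b : ℕ} (h : a ≤ b) : (p : ℝ) ^ (-(b : ℤ)) ≤ (p : ℝ) ^ (-(a : ℤ)) :=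
  zpow_le_zpow_right₀ one_lt_p.le (by omega)

lemma zpow_lt_zpow' {a b : ℕ} (h : a < b) : (p : ℝ) ^ (-(b : ℤ)) < (p : ℝ) ^ (-(a : ℤ)) :=
  zpow_lt_zpow_right₀ one_lt_p (by omega)

lemma box_mono {n n' : Fin N → ℕ} (h : ∀ s, n s ≤ n' s) (x : Fin N → ℤ_[p]) :
    box n' x ⊆ box n x := fun _ hy s => (hy s).trans (zpow_le_zpow' (h s))

lemma box_isClopen (n : Fin N → ℕ) (x : Fin N → ℤ_[p]) : IsClopen (box n x) := by
  have hp0 : (0:ℝ) < p := zero_lt_one.trans one_lt_p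
  have : box n x = ⋂ s, (fun y : Fin N → ℤ_[p] => y s) ⁻¹'
      (Metric.closedBall (x s) ((p : ℝ) ^ (-(n s : ℤ)))) := by
    ext y; simp [box, dist_eq_norm]
  rw [this]
  refine isClopen_iInter_of_finite fun s => ?_
  refine IsClopen.preimage ⟨Metric.isClosed_closedBall, ?_⟩ (continuous_apply s)
  exact IsUltrametricDist.isOpen_closedBall _ (zpow_pos hp0 _).ne'

variable [MeasurableSpace (Fin N → ℤ_[p])] [BorelSpace (Fin N → ℤ_[p])]

lemma box_meas (n : Fin N → ℕ) (x : Fin N → ℤ_[p]) : MeasurableSet (box n x) :=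
  (box_isClopen n x).isOpen.measurableSet

lemma half (μ : Measure (Fin N → ℤ_[p])) [μ.IsAddLeftInvariant] (n n' : Fin N → ℕ)
    (hn : ∀ s, n s < n' s) (x : Fin N → ℤ_[p]) (S : Set (Fin N → ℤ_[p])) (hS : S ⊆ box n x)
    (P0 : Fin N → ℤ_[p])
    (a : Fin N → ℚ_[p]) (ha : a ≠ 0)
    (hP : ∀ P ∈ S, ∑ s, a s * ((P s : ℚ_[p]) - P0 s) = 0) :
    2 * μ (⋃ P ∈ S, box n' P) ≤ μ (box n x) := by
  have hp0 : (0:ℝ) < p := zero_lt_one.trans one_lt_p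
  set E := ⋃ P ∈ S, box n' P with hE
  have hEB : E ⊆ box n x := by
    refine Set.iUnion₂_subset fun P hPS => ?_
    exact (box_mono (fun s => (hn s).le) P).trans (box_eq (hS hPS)).le
  have hEo : IsOpen E := isOpen_biUnion fun P _ => (box_isClopen n' P).isOpen
  have hne : ∃ s, a s ≠ 0 := by
    by_contra! h; exact ha (funext h)
  obtain ⟨s1, hs1⟩ := hne
  obtain ⟨s0, -, hs0⟩ := Finset.exists_max_image Finset.univ
    (fun s => ‖a s‖ * (p : ℝ) ^ (-(n s : ℤ))) ⟨s1, Finset.mem_univ _⟩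
  have hpos : 0 < ‖a s0‖ * (p : ℝ) ^ (-(n s0 : ℤ)) := by
    refine lt_of_lt_of_le ?_ (hs0 s1 (Finset.mem_univ _))
    have := norm_pos_iff.2 hs1
    positivity
  let t : Fin N → ℤ_[p] := Pi.single s0 ((p : ℤ_[p]) ^ (n s0))
  have ht0 : ‖t s0‖ = (p : ℝ) ^ (-(n s0 : ℤ)) := by simp [t]
  have ht1 : ∀ s, s ≠ s0 → t s = 0 := fun s hs => by simp [t, hs]
  let E' := (fun y => t + y) ⁻¹' E
  have hE' : μ E' = μ E := measure_preimage_add μ t E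
  have hE'B : E' ⊆ box n x := by
    intro y hy s
    have h1 := hEB hy s
    simp only [Pi.add_apply] at h1
    have : y s - x s = (t s + y s - x s) - t s := by ring
    rw [this]
    refine (norm_sub_le_max' _ _).trans (max_le h1 ?_)
    by_cases hs : s = s0
    · rw [hs, ht0]
    · rw [ht1 s hs, norm_zero]; positivity
  have hdisj : Disjoint E E' := by
    rw [Set.disjoint_left]
    intro y hy hy'
    simp only [hE, Set.mem_iUnion, exists_prop] at hy
    have hy'' : t + y ∈ E := hy'
    simp only [hE, Set.mem_iUnion, exists_prop] at hy''
    obtain ⟨P, hPS, hyP⟩ := hy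
    obtain ⟨Q, hQS, hyQ⟩ := hy''
    have hsum : ∑ s, a s * ((Q s : ℚ_[p]) - P s) = 0 := by
      have h1 := hP P hPS
      have h2 := hP Q hQS
      rw [← sub_eq_zero.2 (h2.trans h1.symm), ← Finset.sum_sub_distrib]
      refine Finset.sum_congr rfl fun s _ => by ring
    -- `Q s - P s = t s + e s`
    have he : ∀ s, ‖(Q s - P s) - t s‖ ≤ (p : ℝ) ^ (-(n' s : ℤ)) := by
      intro s
      have h1 := hyP s
      have h2 := hyQ s
      simp only [Pi.add_apply] at h2
      have : (Q s - P s) - t s = (y s - P s) - (t s + y s - Q s) := by ring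
      rw [this]
      exact (norm_sub_le_max' _ _).trans (max_le h1 h2)
    have hsum2 : a s0 * (t s0 : ℚ_[p]) = - ∑ s, a s * (((Q s - P s - t s : ℤ_[p])) : ℚ_[p]) := by
      have : ∑ s, a s * (((Q s - P s - t s : ℤ_[p])) : ℚ_[p])
          = ∑ s, a s * ((Q s : ℚ_[p]) - P s) - ∑ s, a s * (t s : ℚ_[p]) := by
        rw [← Finset.sum_sub_distrib]
        refine Finset.sum_congr rfl fun s _ => by push_cast; ring
      rw [this, hsum, zero_sub, neg_neg]
      rw [Finset.sum_eq_single s0]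
      · intro s _ hs; rw [ht1 s hs]; simp
      · simp
    have hnorm : ‖a s0 * (t s0 : ℚ_[p])‖ = ‖a s0‖ * (p : ℝ) ^ (-(n s0 : ℤ)) := by
      rw [norm_mul, ← PadicInt.norm_def, ht0]
    have hlt : ‖a s0 * (t s0 : ℚ_[p])‖ < ‖a s0‖ * (p : ℝ) ^ (-(n s0 : ℤ)) := by
      rw [hsum2, norm_neg]
      obtain ⟨s2, -, hs2⟩ := IsUltrametricDist.exists_norm_finsetSum_le_of_nonempty
        (⟨s0, Finset.mem_univ _⟩ : (Finset.univ : Finset (Fin N)).Nonempty)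
        (fun s => a s * (((Q s - P s - t s : ℤ_[p])) : ℚ_[p]))
      refine hs2.trans_lt ?_
      rw [norm_mul, ← PadicInt.norm_def]
      by_cases h0 : a s2 = 0
      · rw [h0, norm_zero, zero_mul]; exact hpos
      · have h00 := norm_pos_iff.2 h0
        calc ‖a s2‖ * ‖Q s2 - P s2 - t s2‖ ≤ ‖a s2‖ * (p : ℝ) ^ (-(n' s2 : ℤ)) := by
              gcongr; exact he s2
          _ < ‖a s2‖ * (p : ℝ) ^ (-(n s2 : ℤ)) := by
              have := zpow_lt_zpow' (p := p) (hn s2)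
              gcongr
          _ ≤ _ := hs0 s2 (Finset.mem_univ _)
    exact absurd hnorm hlt.ne
  calc 2 * μ E = μ E + μ E' := by rw [hE', two_mul]
    _ = μ (E ∪ E') := (measure_union' hdisj hEo.measurableSet).symm
    _ ≤ _ := measure_mono (Set.union_subset hEB hE'B)

lemma step (μ ν : Measure (Fin N → ℤ_[p])) [μ.IsAddLeftInvariant] [IsFiniteMeasure μ]
    (n n' : Fin N → ℕ) (hn : ∀ s, n s < n' s) (H : ℝ)
    (hH : ((N + 1).factorial : ℝ) * H ^ (N + 1) < (p : ℝ) ^ (∑ s, n s))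
    (k : ℕ) (x : Fin N → ℤ_[p]) (hx : ν (box n x) < 2 ^ k * μ (box n x)) :
    ∃ y ∈ box n x, ν (box n' y) < 2 ^ (k + 1) * μ (box n' y) ∧
      ∀ P ∈ ratPts p N H, P ∉ box n' y := by
  set S := ratPts p N H ∩ box n x with hS
  set E := ⋃ P ∈ S, box n' P with hE
  have hEo : IsOpen E := isOpen_biUnion fun P _ => (box_isClopen n' P).isOpen
  have hEh : 2 * μ E ≤ μ (box n x) := by
    rcases S.eq_empty_or_nonempty with h | ⟨P0, hP0⟩
    · rw [hE, h]; simp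
    · obtain ⟨a, ha, haP⟩ := hyper n H hH S P0 hP0 Set.inter_subset_left (by
        rw [box_eq hP0.2]; exact Set.inter_subset_right)
      exact half μ n n' hn x S Set.inter_subset_right P0 a ha haP
  have hEB : E ⊆ box n x := by
    refine Set.iUnion₂_subset fun P hPS => ?_
    exact (box_mono (fun s => (hn s).le) P).trans (box_eq hPS.2).le
  have hsubB : ∀ y ∈ box n x, box n' y ⊆ box n x := fun y hy =>
    (box_mono (fun s => (hn s).le) y).trans (box_eq hy).le
  by_contra! hcon
  have hcon' : ∀ y ∈ box n x \ E, 2 ^ (k+1) * μ (box n' y) ≤ ν (box n' y) := by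
    intro y hy
    by_contra! hlt
    obtain ⟨P, hP, hPy⟩ := hcon y hy.1 hlt
    apply hy.2
    rw [hE]
    simp only [Set.mem_iUnion, exists_prop]
    exact ⟨P, ⟨hP, hsubB y hy.1 hPy⟩, box_symm hPy⟩
  let F : Set (Set (Fin N → ℤ_[p])) := (box n') '' (box n x \ E)
  have hFd : F.Pairwise Disjoint := by
    rintro _ ⟨y, hy, rfl⟩ _ ⟨z, hz, rfl⟩ hne
    rw [Set.disjoint_left]
    intro w hw hw'
    exact hne ((box_eq hw).symm.trans (box_eq hw'))
  have hFc : F.Countable := by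
    apply Set.PairwiseDisjoint.countable_of_isOpen (s := id) hFd
    · rintro _ ⟨y, hy, rfl⟩; exact (box_isClopen n' y).isOpen
    · rintro _ ⟨y, hy, rfl⟩; exact ⟨y, mem_box_self _ _⟩
  have hFm : ∀ s ∈ F, MeasurableSet s := by
    rintro _ ⟨y, hy, rfl⟩; exact box_meas n' y
  have hFU : ⋃₀ F = box n x \ E := by
    ext w
    constructor
    · rintro ⟨_, ⟨y, hy, rfl⟩, hw⟩
      refine ⟨hsubB y hy.1 hw, fun hwE => hy.2 ?_⟩
      rw [hE] at hwE ⊢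
      simp only [Set.mem_iUnion, exists_prop] at hwE ⊢
      obtain ⟨P, hPS, hwP⟩ := hwE
      exact ⟨P, hPS, box_trans hwP (box_symm hw)⟩
    · intro hw
      exact ⟨_, ⟨w, hw, rfl⟩, mem_box_self _ _⟩
  have h1 : 2 ^ (k+1) * μ (box n x \ E) ≤ ν (box n x \ E) := by
    rw [← hFU, measure_sUnion hFc hFd hFm, measure_sUnion hFc hFd hFm, ← ENNReal.tsum_mul_left]
    refine ENNReal.tsum_le_tsum ?_
    rintro ⟨_, ⟨y, hy, rfl⟩⟩
    exact hcon' y hy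
  have h2 : μ (box n x) ≤ 2 * μ (box n x \ E) := by
    have h3 : μ (box n x) = μ E + μ (box n x \ E) := by
      rw [measure_add_sdiff hEo.measurableSet.nullMeasurableSet, Set.union_eq_self_of_subset_left hEB]
    have h4 : μ E ≤ μ (box n x \ E) := by
      rw [h3, two_mul] at hEh
      exact (ENNReal.add_le_add_iff_left (measure_ne_top μ E)).1 hEh
    rw [h3, two_mul]; gcongr
  have h5 : ν (box n x) < ν (box n x) := calc
    ν (box n x) < 2 ^ k * μ (box n x) := hx
    _ ≤ 2 ^ k * (2 * μ (box n x \ E)) := by gcongr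
    _ = 2 ^ (k+1) * μ (box n x \ E) := by ring
    _ ≤ ν (box n x \ E) := h1
    _ ≤ ν (box n x) := measure_mono Set.sdiff_subset
  exact lt_irrefl _ h5

end

/-- The exponents of the level `k` boxes. -/
noncomputable def nn {N : ℕ} (i : Fin N → ℝ) (m k : ℕ) (s : Fin N) : ℕ := ⌊(1 + i s) * (m * k : ℝ)⌋₊

/-- A normalising constant. -/
noncomputable def h0 (p N : ℕ) : ℝ := 1 / (2 * (N + 1).factorial * (p : ℝ) ^ N)

section
variable {p : ℕ} [Fact p.Prime] {N : ℕ}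

lemma h0_pos : 0 < h0 p N := by
  have hp0 : (0:ℝ) < p := zero_lt_one.trans one_lt_p
  have := Nat.factorial_pos (N + 1)
  unfold h0; positivity

lemma h0_le_one : h0 p N ≤ 1 := by
  unfold h0
  have h1 : (1:ℝ) ≤ (p:ℝ) ^ N := one_le_pow₀ one_lt_p.le
  have h2 : (1:ℝ) ≤ ((N + 1).factorial : ℝ) := by
    exact_mod_cast Nat.succ_le_of_lt (Nat.factorial_pos (N + 1))
  rw [div_le_one (by positivity)]
  nlinarith

lemma nn_lt (i : Fin N → ℝ) (hi : ∀ s, 0 ≤ i s) (m : ℕ) (hm : 1 ≤ m) (k : ℕ) (s : Fin N) :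
    nn i m k s < nn i m (k + 1) s := by
  unfold nn
  rw [← Nat.succ_le_iff]
  apply Nat.le_floor
  have h1 : (⌊(1 + i s) * (m * k : ℝ)⌋₊ : ℝ) ≤ (1 + i s) * (m * k : ℝ) :=
    Nat.floor_le (mul_nonneg (by linarith [hi s]) (by positivity))
  have hm' : (1:ℝ) ≤ m := by exact_mod_cast hm
  push_cast
  nlinarith [hi s, mul_nonneg (hi s) (zero_le_one.trans hm')]

lemma le_nn (i : Fin N → ℝ) (hi : ∀ s, 0 ≤ i s) (m k : ℕ) (s : Fin N) :
    m * k ≤ nn i m k s := by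
  apply Nat.le_floor
  push_cast
  have : (0:ℝ) ≤ m * k := by positivity
  nlinarith [hi s, mul_nonneg (hi s) this]

lemma nn_le (i : Fin N → ℝ) (hi : ∀ s, 0 ≤ i s) (m k : ℕ) (s : Fin N) :
    (nn i m k s : ℝ) ≤ (1 + i s) * (m * k) := 
  Nat.floor_le (mul_nonneg (by linarith [hi s]) (by positivity))

lemma height_ineq (i : Fin N → ℝ) (hsum : ∑ s, i s = 1) (m k : ℕ) :
    ((N + 1).factorial : ℝ) * (h0 p N * (p : ℝ) ^ (m * k)) ^ (N + 1) <
      (p : ℝ) ^ (∑ s, nn i m k s) := by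
  have hp1 : (1:ℝ) < p := one_lt_p
  have hp0 : (0:ℝ) < p := zero_lt_one.trans one_lt_p
  have hexp : m * k * (N + 1) ≤ ∑ s, nn i m k s + N := by
    have h1 : ∑ s, (1 + i s) * (m * k : ℝ) ≤ ∑ s, ((nn i m k s : ℝ) + 1) :=
      Finset.sum_le_sum fun s _ => (Nat.lt_floor_add_one _).le
    rw [← Finset.sum_mul, Finset.sum_add_distrib, Finset.sum_add_distrib, hsum] at h1
    simp only [Finset.sum_const, Finset.card_univ, Fintype.card_fin, nsmul_eq_mul, mul_one] at h1
    have : ((m * k * (N + 1) : ℕ) : ℝ) ≤ ((∑ s, nn i m k s + N : ℕ) : ℝ) := by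
      push_cast; linarith
    exact_mod_cast this
  have hpow : (p:ℝ) ^ (m * k * (N + 1)) ≤ (p:ℝ) ^ (∑ s, nn i m k s) * (p:ℝ) ^ N := by
    rw [← pow_add]; exact pow_le_pow_right₀ hp1.le hexp
  have hh : h0 p N ^ (N + 1) ≤ h0 p N := by
    rw [pow_succ]
    have := pow_le_one₀ (n := N) (h0_pos (p := p) (N := N)).le h0_le_one
    nlinarith [h0_pos (p := p) (N := N)]
  have hf : (0:ℝ) < ((N + 1).factorial : ℝ) := by exact_mod_cast Nat.factorial_pos (N + 1)
  have hA : (0:ℝ) < (p:ℝ) ^ (∑ s, nn i m k s) := by positivity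
  calc ((N + 1).factorial : ℝ) * (h0 p N * (p : ℝ) ^ (m * k)) ^ (N + 1)
      = (N + 1).factorial * (h0 p N ^ (N + 1) * (p:ℝ) ^ (m * k * (N + 1))) := by
        rw [mul_pow, ← pow_mul]
    _ ≤ (N + 1).factorial * (h0 p N * ((p:ℝ) ^ (∑ s, nn i m k s) * (p:ℝ) ^ N)) := by
        have := (h0_pos (p := p) (N := N)).le
        gcongr
    _ = (p:ℝ) ^ (∑ s, nn i m k s) / 2 := by
        unfold h0; field_simp
    _ < _ := by linarith

lemma bad_of (i : Fin N → ℝ) (hi : ∀ s, 0 ≤ i s) (m : ℕ) (hm : 1 ≤ m) (x : Fin N → ℤ_[p])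
    (hx : ∀ k, ∀ P ∈ ratPts p N (h0 p N * (p : ℝ) ^ (m * k)), P ∉ box (nn i m (k + 1)) x) :
    ∃ c : ℝ, 0 < c ∧ ∀ (r : Fin N → ℤ) (q : ℤ), q ≠ 0 → ∃ s : Fin N,
      c / max |(q : ℝ)| (⨆ t : Fin N, |(r t : ℝ)|) ≤
        ‖(q : ℤ_[p]) * x s - (r s : ℤ_[p])‖ ^ (1 / (1 + i s)) := by
  have hp1 : (1:ℝ) < p := one_lt_p
  have hp0 : (0:ℝ) < p := zero_lt_one.trans one_lt_p
  have hc1 : h0 p N / (p:ℝ) ^ (2 * m) ≤ 1 := by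
    rw [div_le_one (by positivity)]
    exact h0_le_one.trans (one_le_pow₀ hp1.le)
  have hcpos : 0 < h0 p N / (p:ℝ) ^ (2 * m) := by
    have := h0_pos (p := p) (N := N); positivity
  refine ⟨h0 p N / (p:ℝ) ^ (2 * m), hcpos, ?_⟩
  set c := h0 p N / (p:ℝ) ^ (2 * m) with hc
  suffices hind : ∀ (b : ℕ) (r : Fin N → ℤ) (q : ℤ), q.natAbs = b → q ≠ 0 → ∃ s : Fin N,
      c / max |(q : ℝ)| (⨆ t : Fin N, |(r t : ℝ)|) ≤
        ‖(q : ℤ_[p]) * x s - (r s : ℤ_[p])‖ ^ (1 / (1 + i s)) from fun r q hq => hind _ r q rfl hq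
  intro b
  induction b using Nat.strong_induction_on with
  | _ b ih =>
  intro r q hqb hq
  have hH1 : (1:ℝ) ≤ max |(q : ℝ)| (⨆ t : Fin N, |(r t : ℝ)|) := by
    refine le_trans ?_ (le_max_left _ _)
    exact_mod_cast Int.one_le_abs hq
  by_cases hpq : (p : ℤ) ∣ q
  · by_cases hpr : ∀ s, (p : ℤ) ∣ r s
    · obtain ⟨q', rfl⟩ := hpq
      choose r' hr' using hpr
      have hq' : q' ≠ 0 := right_ne_zero_of_mul hq
      have hlt : q'.natAbs < b := by
        rw [← hqb, Int.natAbs_mul, Int.natAbs_natCast]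
        have h2 := (Fact.out : p.Prime).two_le
        have : 0 < q'.natAbs := Int.natAbs_pos.2 hq'
        nlinarith
      obtain ⟨s, hs⟩ := ih _ hlt r' q' rfl hq'
      refine ⟨s, ?_⟩
      have e1 : max |((p * q' : ℤ) : ℝ)| (⨆ t : Fin N, |(r t : ℝ)|) =
          p * max |(q' : ℝ)| (⨆ t : Fin N, |(r' t : ℝ)|) := by
        rw [mul_max_of_nonneg _ _ hp0.le, Real.mul_iSup_of_nonneg hp0.le]
        congr 1
        · push_cast; rw [abs_mul, abs_of_pos hp0]
        · congr 1; ext t; rw [hr' t]; push_cast; rw [abs_mul, abs_of_pos hp0]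
      have e2 : ((p * q' : ℤ) : ℤ_[p]) * x s - (r s : ℤ_[p]) =
          (p : ℤ_[p]) * ((q' : ℤ_[p]) * x s - (r' s : ℤ_[p])) := by
        rw [hr' s]; push_cast; ring
      rw [e1, e2, norm_mul, PadicInt.norm_p, Real.mul_rpow (by positivity) (norm_nonneg _)]
      have e3 : (p:ℝ)⁻¹ ≤ ((p:ℝ)⁻¹) ^ (1 / (1 + i s)) := by
        conv_lhs => rw [← Real.rpow_one ((p:ℝ)⁻¹)]
        apply Real.rpow_le_rpow_of_exponent_ge (by positivity) (inv_le_one_of_one_le₀ hp1.le)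
        rw [div_le_one (by linarith [hi s])]; linarith [hi s]
      calc c / (p * max |(q' : ℝ)| (⨆ t : Fin N, |(r' t : ℝ)|))
          = (p:ℝ)⁻¹ * (c / max |(q' : ℝ)| (⨆ t : Fin N, |(r' t : ℝ)|)) := by
            rw [div_mul_eq_div_div, div_right_comm]; ring
        _ ≤ _ := by gcongr
    · push Not at hpr
      obtain ⟨s, hs⟩ := hpr
      refine ⟨s, ?_⟩
      have hn1 : ‖(r s : ℤ_[p])‖ = 1 := by
        refine le_antisymm (PadicInt.norm_le_one _) ?_
        by_contra! h
        exact hs ((PadicInt.norm_int_lt_one_iff_dvd _).1 h)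
      have hn2 : ‖(q : ℤ_[p]) * x s‖ < 1 := by
        rw [norm_mul]
        have h1 := (PadicInt.norm_int_lt_one_iff_dvd q).2 hpq
        have h2 := PadicInt.norm_le_one (x s)
        nlinarith [norm_nonneg (q : ℤ_[p]), norm_nonneg (x s)]
      have hn3 : ‖(q : ℤ_[p]) * x s - (r s : ℤ_[p])‖ = 1 := by
        refine le_antisymm (PadicInt.norm_le_one _) ?_
        by_contra! h
        have : (r s : ℤ_[p]) = (q : ℤ_[p]) * x s - ((q : ℤ_[p]) * x s - (r s : ℤ_[p])) := by ring
        have h3 := norm_sub_le_max' ((q : ℤ_[p]) * x s) ((q : ℤ_[p]) * x s - (r s : ℤ_[p]))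
        rw [← this, hn1] at h3
        exact absurd h3 (not_le.2 (max_lt hn2 h))
      rw [hn3, Real.one_rpow]
      exact (div_le_one (by linarith)).2 (hc1.trans hH1)
  · set H := max |(q : ℝ)| (⨆ t : Fin N, |(r t : ℝ)|) with hH
    have hqn : ‖(q : ℤ_[p])‖ = 1 := by
      refine le_antisymm (PadicInt.norm_le_one _) ?_
      by_contra! h
      exact hpq ((PadicInt.norm_int_lt_one_iff_dvd _).1 h)
    have hh0 := h0_pos (p := p) (N := N)
    obtain ⟨j, hj1, hj2⟩ := exists_nat_pow_near (x := H / h0 p N) (y := (p:ℝ) ^ m)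
      (by rw [one_le_div hh0]; exact h0_le_one.trans hH1) (one_lt_pow₀ hp1 (by omega))
    rw [le_div_iff₀ hh0] at hj1
    rw [div_lt_iff₀ hh0, ← pow_mul] at hj2
    obtain ⟨u, hu⟩ := PadicInt.isUnit_iff.2 hqn
    let P : Fin N → ℤ_[p] := fun s => (u⁻¹ : ℤ_[p]ˣ) * (r s : ℤ_[p])
    have hqP : ∀ s, (q : ℤ_[p]) * P s = r s := by
      intro s; simp [P, ← hu]
    have hP : P ∈ ratPts p N (h0 p N * (p : ℝ) ^ (m * (j + 1))) := by
      refine ⟨q, r, hq, hqP, ?_, fun s => ?_⟩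
      · rw [mul_comm]; exact (le_max_left _ _).trans_lt hj2
      · rw [mul_comm]
        refine lt_of_le_of_lt ?_ hj2
        exact (le_ciSup (f := fun t => |(r t : ℝ)|) (Set.finite_range _).bddAbove s).trans
          (le_max_right _ _)
    have hnot := hx _ P hP
    simp only [box, Set.mem_ofPred_eq, not_forall, not_le] at hnot
    obtain ⟨s, hs⟩ := hnot
    refine ⟨s, ?_⟩
    have e1 : ‖(q : ℤ_[p]) * x s - (r s : ℤ_[p])‖ = ‖P s - x s‖ := by
      rw [← hqP s, ← mul_sub, norm_mul, hqn, one_mul, norm_sub_rev]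
    have his : 0 < 1 + i s := by linarith [hi s]
    have e2 : ((p:ℝ) ^ (m * (j + 2)))⁻¹ ≤ ‖P s - x s‖ ^ (1 / (1 + i s)) := by
      have e3 : (p:ℝ) ^ (-((1 + i s) * (m * (j + 2 : ℕ)))) ≤ ‖P s - x s‖ := by
        refine le_trans ?_ hs.le
        rw [← Real.rpow_intCast]
        apply Real.rpow_le_rpow_of_exponent_le hp1.le
        push_cast
        have := nn_le i hi m (j + 1 + 1) s
        push_cast at this
        have e : (j:ℝ) + 1 + 1 = j + 2 := by ring
        rw [e] at this
        linarith
      calc ((p:ℝ) ^ (m * (j + 2)))⁻¹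
          = ((p:ℝ) ^ (-((1 + i s) * (m * (j + 2 : ℕ))))) ^ (1 / (1 + i s)) := by
            rw [← Real.rpow_mul hp0.le, ← Real.rpow_natCast, ← Real.rpow_neg hp0.le]
            congr 1
            push_cast
            field_simp
        _ ≤ _ := Real.rpow_le_rpow (by positivity) e3 (by positivity)
    rw [e1]
    refine le_trans ?_ e2
    rw [hc, div_div, div_le_iff₀ (by positivity), ← div_eq_inv_mul, le_div_iff₀ (by positivity)]
    have e4 : (p:ℝ) ^ (m * (j + 2)) = ((p:ℝ) ^ m) ^ j * (p:ℝ) ^ (2 * m) := by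
      rw [← pow_mul, ← pow_add]; ring
    rw [e4]
    have : (0:ℝ) < (p:ℝ) ^ (2 * m) := by positivity
    nlinarith

end

section
variable {p : ℕ} [Fact p.Prime] {N : ℕ}
variable [MeasurableSpace (Fin N → ℤ_[p])] [BorelSpace (Fin N → ℤ_[p])]

lemma avoid (μ : Measure (Fin N → ℤ_[p])) [μ.IsAddLeftInvariant] (hμ : μ Set.univ = 1)
    (i : Fin N → ℝ) (hi : ∀ s, 0 ≤ i s) (hsum : ∑ s, i s = 1) (m : ℕ) (hm : 1 ≤ m)
    (nU : ℕ → ℕ) (u : ℕ → Fin N → ℤ_[p])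
    (hU : ∑' j, 2 ^ (nU j / m + 1) * μ (box (fun _ => nU j) (u j)) < 1) :
    ∃ x : Fin N → ℤ_[p],
      (∀ k, ∀ P ∈ ratPts p N (h0 p N * (p : ℝ) ^ (m * k)), P ∉ box (nn i m (k + 1)) x) ∧
      ∀ j, x ∉ box (fun _ => nU j) (u j) := by
  haveI : IsFiniteMeasure μ := ⟨by rw [hμ]; exact ENNReal.one_lt_top⟩
  let ν : Measure (Fin N → ℤ_[p]) := Measure.sum fun j =>
    ((2 : ℝ≥0∞) ^ (nU j / m + 1)) • μ.restrict (box (fun _ => nU j) (u j))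
  have hstep : ∀ k (x : {x // ν (box (nn i m k) x) < 2 ^ k * μ (box (nn i m k) x)}),
      ∃ y : {y // ν (box (nn i m (k + 1)) y) < 2 ^ (k + 1) * μ (box (nn i m (k + 1)) y)},
        y.1 ∈ box (nn i m k) x.1 ∧ ∀ P ∈ ratPts p N (h0 p N * (p : ℝ) ^ (m * k)),
          P ∉ box (nn i m (k + 1)) y.1 := by
    rintro k ⟨x, hx⟩
    obtain ⟨y, hy1, hy2, hy3⟩ := step μ ν (nn i m k) (nn i m (k + 1)) (nn_lt i hi m hm k) _
      (height_ineq i hsum m k) k x hx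
    exact ⟨⟨y, hy2⟩, hy1, hy3⟩
  choose F hF1 hF2 using hstep
  have hbox0 : box (nn i m 0) (0 : Fin N → ℤ_[p]) = Set.univ := by
    ext y
    simp [box, nn, PadicInt.norm_le_one]
  have hstart : ν (box (nn i m 0) 0) < 2 ^ 0 * μ (box (nn i m 0) 0) := by
    rw [hbox0, hμ, pow_zero, one_mul, Measure.sum_apply _ MeasurableSet.univ]
    simpa using hU
  let X : (k : ℕ) → {x // ν (box (nn i m k) x) < 2 ^ k * μ (box (nn i m k) x)} :=
    fun k => Nat.rec ⟨0, hstart⟩ F k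
  have hX1 : ∀ k, (X (k + 1)).1 ∈ box (nn i m k) (X k).1 := fun k => hF1 k (X k)
  have hX2 : ∀ k, ∀ P ∈ ratPts p N (h0 p N * (p : ℝ) ^ (m * k)),
          P ∉ box (nn i m (k + 1)) (X (k + 1)).1 := fun k => hF2 k (X k)
  obtain ⟨x, hx⟩ := IsCompact.nonempty_iInter_of_sequence_nonempty_isCompact_isClosed
    (fun k => box (nn i m k) (X k).1)
    (fun k => (box_mono (fun s => (nn_lt i hi m hm k s).le) _).trans (box_eq (hX1 k)).le)
    (fun k => ⟨_, mem_box_self _ _⟩) (box_isClopen _ _).isClosed.isCompact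
    (fun k => (box_isClopen _ _).isClosed)
  rw [Set.mem_iInter] at hx
  have hx' : ∀ k, box (nn i m k) x = box (nn i m k) (X k).1 := fun k => box_eq (hx k)
  refine ⟨x, fun k P hP => ?_, fun j hj => ?_⟩
  · rw [hx']; exact hX2 k P hP
  · set K := nU j / m + 1 with hK
    have hlt := (X K).2
    rw [← hx'] at hlt
    have hsub : box (nn i m K) x ⊆ box (fun _ => nU j) (u j) := by
      rw [← box_eq hj]
      refine box_mono (fun s => ?_) x
      refine le_trans ?_ (le_nn i hi m K s)
      rw [hK]
      exact (Nat.lt_mul_div_succ (nU j) (by omega)).le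
    have hle : 2 ^ K * μ (box (nn i m K) x) ≤ ν (box (nn i m K) x) := by
      have h1 := Measure.le_sum (fun j =>
        ((2 : ℝ≥0∞) ^ (nU j / m + 1)) • μ.restrict (box (fun _ => nU j) (u j))) j
      have h2 := h1 (box (nn i m K) x)
      refine le_trans (le_of_eq ?_) h2
      rw [Measure.smul_apply, Measure.restrict_apply (box_meas _ _), Set.inter_eq_left.2 hsub,
        smul_eq_mul]
    exact absurd hlt (not_lt.2 hle)

lemma ball_measure (μ : Measure (Fin N → ℤ_[p])) [μ.IsAddLeftInvariant] (hμ : μ Set.univ = 1)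
    (n : ℕ) (x : Fin N → ℤ_[p]) :
    ((p ^ (n * N) : ℕ) : ℝ≥0∞) * μ (box (fun _ => n) x) ≤ 1 := by
  let t : (Fin N → Fin (p ^ n)) → Fin N → ℤ_[p] := fun g s => ((g s : ℕ) : ℤ_[p])
  have hm : ∀ g, MeasurableSet ((fun y => t g + y) ⁻¹' (box (fun _ => n) x)) := fun g =>
    (measurable_const_add (t g)) (box_meas _ _)
  have hd : Pairwise (Function.onFun Disjoint
      fun g => (fun y => t g + y) ⁻¹' (box (fun _ => n) x)) := by
    intro g g' hne
    rw [Function.onFun, Set.disjoint_left]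
    intro y hy hy'
    apply hne
    ext s
    have h1 := hy s
    have h2 := hy' s
    simp only [Pi.add_apply] at h1 h2
    have h3 : ‖(((g s : ℕ) : ℤ) - ((g' s : ℕ) : ℤ) : ℤ_[p])‖ ≤ (p : ℝ) ^ (-(n : ℤ)) := by
      have : (((g s : ℕ) : ℤ) - ((g' s : ℕ) : ℤ) : ℤ_[p]) =
        (t g s + y s - x s) - (t g' s + y s - x s) := by simp [t]
      rw [this]
      exact (norm_sub_le_max' _ _).trans (max_le h1 h2)
    rw [← Int.cast_sub, PadicInt.norm_int_le_pow_iff_dvd] at h3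
    have h4 := Int.emod_emod_of_dvd ((g s : ℕ) : ℤ) (dvd_refl ((p:ℤ)^n))
    have h5 : ((g s : ℕ) : ℤ) ≡ ((g' s : ℕ) : ℤ) [ZMOD ((p ^ n : ℕ) : ℤ)] := by
      refine (Int.modEq_iff_dvd.2 ?_).symm
      exact_mod_cast h3
    exact Nat.ModEq.eq_of_lt_of_lt ((Int.natCast_modEq_iff).1 h5) (g s).2 (g' s).2
  have h := measure_iUnion (μ := μ) hd hm
  have h' : ∑' g : Fin N → Fin (p ^ n), μ ((fun y => t g + y) ⁻¹' (box (fun _ => n) x)) =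
      ((p ^ (n * N) : ℕ) : ℝ≥0∞) * μ (box (fun _ => n) x) := by
    simp only [measure_preimage_add]
    rw [tsum_fintype]
    simp [pow_mul]
  rw [← h', ← h, ← hμ]
  exact measure_mono (Set.subset_univ _)

lemma ball_measure' (μ : Measure (Fin N → ℤ_[p])) [μ.IsAddLeftInvariant] (hμ : μ Set.univ = 1)
    (m : ℕ) (hm : 1 ≤ m) (n : ℕ) (x : Fin N → ℤ_[p]) :
    2 ^ (n / m + 1) * μ (box (fun _ => n) x) ≤
      ENNReal.ofReal (2 * (p : ℝ) ^ (-((N - 1 / m : ℝ) * n))) := by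
  have hp1 : (1:ℝ) < p := one_lt_p
  have hp0 : (0:ℝ) < p := zero_lt_one.trans one_lt_p
  have h1 : μ (box (fun _ => n) x) ≤ ENNReal.ofReal (((p : ℝ) ^ (n * N))⁻¹) := by
    have := ball_measure μ hμ n x
    rw [ENNReal.ofReal_inv_of_pos (by positivity), ENNReal.ofReal_pow hp0.le, ENNReal.ofReal_natCast]
    rw [ENNReal.le_inv_iff_mul_le, mul_comm]
    exact_mod_cast this
  have hpow : (2:ℝ) ^ (n / m) ≤ (p:ℝ) ^ ((n:ℝ) / m) := by
    have h2 : (2:ℝ) ≤ p := by exact_mod_cast (Fact.out : p.Prime).two_le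
    calc (2:ℝ) ^ (n / m) ≤ (p:ℝ) ^ (n / m) := by gcongr
      _ = (p:ℝ) ^ ((n / m : ℕ) : ℝ) := (Real.rpow_natCast _ _).symm
      _ ≤ _ := Real.rpow_le_rpow_of_exponent_le hp1.le Nat.cast_div_le
  calc 2 ^ (n / m + 1) * μ (box (fun _ => n) x)
      ≤ ENNReal.ofReal (2 ^ (n / m + 1)) * ENNReal.ofReal (((p : ℝ) ^ (n * N))⁻¹) := by
        rw [ENNReal.ofReal_pow (by norm_num), ENNReal.ofReal_ofNat]; gcongr
    _ = ENNReal.ofReal (2 ^ (n / m + 1) * ((p : ℝ) ^ (n * N))⁻¹) :=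
        (ENNReal.ofReal_mul (by positivity)).symm
    _ ≤ _ := by
      apply ENNReal.ofReal_le_ofReal
      have e : (p : ℝ) ^ (-((N - 1 / m : ℝ) * n)) = (p:ℝ) ^ ((n:ℝ) / m) * ((p : ℝ) ^ (n * N))⁻¹ := by
        rw [← Real.rpow_natCast, ← Real.rpow_neg hp0.le, ← Real.rpow_add hp0]
        congr 1; push_cast; ring
      rw [e, pow_succ']
      have : (0:ℝ) ≤ ((p : ℝ) ^ (n * N))⁻¹ := by positivity
      nlinarith [mul_le_mul_of_nonneg_right hpow this]

lemma choose_scale (d : ℝ) (hd : 0 < d) (D : ℝ≥0∞) (hD : D ≤ 1) (ε : ℝ≥0∞) (hε : 0 < ε) :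
    ∃ n : ℕ, D ≤ ENNReal.ofReal ((p : ℝ) ^ (-(n : ℤ))) ∧
      ENNReal.ofReal (2 * (p : ℝ) ^ (-(d * n))) ≤ ENNReal.ofReal (2 * (p:ℝ) ^ d) * D ^ d + ε := by
  have hp1 : (1:ℝ) < p := one_lt_p
  have hp0 : (0:ℝ) < p := zero_lt_one.trans one_lt_p
  have hrew : ∀ n : ℕ, (p : ℝ) ^ (-(d * n)) = ((p:ℝ) ^ (-d)) ^ n := by
    intro n
    rw [← Real.rpow_natCast, ← Real.rpow_mul hp0.le]; congr 1; ring
  rcases eq_or_ne D 0 with rfl | hD0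
  · have hlim : Filter.Tendsto (fun n : ℕ => ENNReal.ofReal (2 * (p : ℝ) ^ (-(d * n))))
        Filter.atTop (nhds 0) := by
      have : Filter.Tendsto (fun n : ℕ => 2 * (p : ℝ) ^ (-(d * n))) Filter.atTop (nhds (2 * 0)) := by
        simp only [hrew]
        exact (tendsto_pow_atTop_nhds_zero_of_lt_one (by positivity)
          (Real.rpow_lt_one_of_one_lt_of_neg hp1 (by linarith))).const_mul 2
      simpa using ENNReal.tendsto_ofReal this
    obtain ⟨n, hn⟩ := (hlim.eventually (gt_mem_nhds hε)).exists
    exact ⟨n, zero_le, hn.le.trans le_add_self⟩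
  · have hDt : D ≠ ⊤ := ne_top_of_le_ne_top ENNReal.one_ne_top hD
    have hDr : D = ENNReal.ofReal D.toReal := (ENNReal.ofReal_toReal hDt).symm
    have hpos : 0 < D.toReal := ENNReal.toReal_pos hD0 hDt
    have hle : D.toReal ≤ 1 := by
      have := ENNReal.toReal_mono ENNReal.one_ne_top hD
      simpa using this
    obtain ⟨n, hn1, hn2⟩ := exists_nat_pow_near_of_lt_one (x := D.toReal) (y := (p:ℝ)⁻¹) hpos hle
      (by positivity) (inv_lt_one_of_one_lt₀ hp1)
    refine ⟨n, ?_, ?_⟩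
    · rw [hDr]; apply ENNReal.ofReal_le_ofReal
      rw [zpow_neg, zpow_natCast, ← inv_pow]; exact hn2
    · refine le_trans ?_ le_self_add
      rw [hDr, ENNReal.ofReal_rpow_of_pos hpos, ← ENNReal.ofReal_mul (by positivity)]
      apply ENNReal.ofReal_le_ofReal
      rw [mul_assoc]
      gcongr
      have h1 : (((p:ℝ)⁻¹) ^ (n + 1)) ^ d ≤ D.toReal ^ d :=
        Real.rpow_le_rpow (by positivity) hn1.le hd.le
      calc (p : ℝ) ^ (-(d * n)) = (p:ℝ) ^ d * (((p:ℝ)⁻¹) ^ (n + 1)) ^ d := by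
            rw [inv_pow, ← Real.rpow_natCast, ← Real.rpow_neg hp0.le, ← Real.rpow_mul hp0.le,
              ← Real.rpow_add hp0]
            congr 1; push_cast; ring
        _ ≤ _ := by gcongr

lemma lower (i : Fin N → ℝ) (hi : ∀ s, 0 ≤ i s) (hsum : ∑ s, i s = 1) (m : ℕ) (hm : 2 ≤ m)
    (hN : 1 ≤ N) (Bad : Set (Fin N → ℤ_[p]))
    (hBad : ∀ x : Fin N → ℤ_[p], (∀ k, ∀ P ∈ ratPts p N (h0 p N * (p : ℝ) ^ (m * k)),
      P ∉ box (nn i m (k + 1)) x) → x ∈ Bad) :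
    ENNReal.ofReal (N - 1 / m) ≤ dimH Bad := by
  have hp1 : (1:ℝ) < p := one_lt_p
  have hp0 : (0:ℝ) < p := zero_lt_one.trans one_lt_p
  set d : ℝ := N - 1 / m with hd
  have hdpos : 0 < d := by
    have h1 : (1:ℝ) ≤ N := by exact_mod_cast hN
    have h2 : (2:ℝ) ≤ m := by exact_mod_cast hm
    have h3 : (1:ℝ) / m < 1 := by rw [div_lt_one (by linarith)]; linarith
    rw [hd]; linarith
  apply le_dimH_of_hausdorffMeasure_ne_zero
  rw [Real.coe_toNNReal _ hdpos.le]
  intro hzero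
  let μ : Measure (Fin N → ℤ_[p]) := Measure.addHaarMeasure ⊤
  have hμ : μ Set.univ = 1 := Measure.addHaarMeasure_self (K₀ := ⊤)
  set C : ℝ := 2 * (p:ℝ) ^ d with hC
  have hCpos : 0 < C := by positivity
  rw [Measure.hausdorffMeasure_apply] at hzero
  have hz1 := (ENNReal.iSup_eq_zero.1 (ENNReal.iSup_eq_zero.1 hzero 1)) one_pos
  have hδ : (0:ℝ≥0∞) < ENNReal.ofReal (1 / (2 * C)) := ENNReal.ofReal_pos.2 (by positivity)
  rw [← hz1] at hδ
  simp only [iInf_lt_iff] at hδ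
  obtain ⟨t, ht1, ht2, ht3⟩ := hδ
  obtain ⟨ε, hε1, hε2⟩ := ENNReal.exists_pos_sum_of_countable (ε := ENNReal.ofReal (1/2))
    (ENNReal.ofReal_pos.2 (by norm_num)).ne' ℕ
  choose n hn1 hn2 using fun j => choose_scale (p := p) d hdpos (Metric.ediam (t j)) (ht2 j) (ε j)
    (by exact_mod_cast hε1 j)
  have hu : ∀ j, ∃ u : Fin N → ℤ_[p], t j ⊆ box (fun _ => n j) u := by
    intro j
    rcases (t j).eq_empty_or_nonempty with h | ⟨u, hu⟩
    · exact ⟨0, by rw [h]; exact Set.empty_subset _⟩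
    · refine ⟨u, fun y hy s => ?_⟩
      have h1 := (Metric.edist_le_ediam_of_mem hy hu).trans (hn1 j)
      have h2 := (edist_le_pi_edist y u s).trans h1
      rw [edist_dist, ENNReal.ofReal_le_ofReal_iff (by positivity), dist_eq_norm] at h2
      exact h2
  choose u hu using hu
  have hT : ∀ j, Metric.ediam (t j) ^ d ≤ ⨆ _ : (t j).Nonempty, Metric.ediam (t j) ^ d := by
    intro j
    rcases (t j).eq_empty_or_nonempty with h | h
    · rw [h]; simp [hdpos]
    · exact le_iSup (fun _ : (t j).Nonempty => Metric.ediam (t j) ^ d) h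
  have hU : ∑' j, 2 ^ (n j / m + 1) * μ (box (fun _ => n j) (u j)) < 1 := by
    calc ∑' j, 2 ^ (n j / m + 1) * μ (box (fun _ => n j) (u j))
        ≤ ∑' j, (ENNReal.ofReal C * (⨆ _ : (t j).Nonempty, Metric.ediam (t j) ^ d) + ε j) := by
          refine ENNReal.tsum_le_tsum fun j => ?_
          refine (ball_measure' μ hμ m (by omega) (n j) (u j)).trans ((hn2 j).trans ?_)
          gcongr
          exact hT j
      _ = ENNReal.ofReal C * (∑' j, ⨆ _ : (t j).Nonempty, Metric.ediam (t j) ^ d) + ∑' j, (ε j : ℝ≥0∞) := by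
          rw [ENNReal.tsum_add, ENNReal.tsum_mul_left]
      _ < ENNReal.ofReal (1/2) + ENNReal.ofReal (1/2) := by
          refine ENNReal.add_lt_add_of_le_of_lt ?_ ?_ hε2
          · exact (ENNReal.mul_lt_top ENNReal.ofReal_lt_top (ht3.trans ENNReal.ofReal_lt_top)).ne
          · calc _ ≤ ENNReal.ofReal C * ENNReal.ofReal (1 / (2 * C)) := by gcongr
              _ = ENNReal.ofReal (1/2) := by
                rw [← ENNReal.ofReal_mul hCpos.le]; congr 1; field_simp
      _ = 1 := by rw [← ENNReal.ofReal_add (by norm_num) (by norm_num)]; norm_num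
  obtain ⟨x, hx1, hx2⟩ := avoid μ hμ i hi hsum m (by omega) n u hU
  obtain ⟨j, hj⟩ := Set.mem_iUnion.1 (ht1 (hBad x hx1))
  exact hx2 j (hu j hj)

lemma upper (Bad : Set (Fin N → ℤ_[p])) : dimH Bad ≤ N := by
  have hp1 : (1:ℝ) < p := one_lt_p
  have hp0 : (0:ℝ) < p := zero_lt_one.trans one_lt_p
  refine (dimH_mono (Set.subset_univ Bad)).trans ?_
  have : dimH (Set.univ : Set (Fin N → ℤ_[p])) ≤ ((N : NNReal) : ℝ≥0∞) := by
    apply dimH_le_of_hausdorffMeasure_ne_top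
    refine ne_top_of_le_ne_top ENNReal.one_ne_top ?_
    let t : (n : ℕ) → (Fin N → Fin (p ^ n)) → Set (Fin N → ℤ_[p]) := fun n g =>
      box (fun _ => n) (fun s => ((g s : ℕ) : ℤ_[p]))
    have hdiam : ∀ n g, Metric.ediam (t n g) ≤ ENNReal.ofReal (((p:ℝ)⁻¹) ^ n) := by
      intro n g
      apply Metric.ediam_le
      intro y hy z hz
      rw [edist_pi_le_iff]
      intro s
      rw [edist_dist, dist_eq_norm]
      apply ENNReal.ofReal_le_ofReal
      have := box_trans (box_symm hz) hy s
      rwa [zpow_neg, zpow_natCast, ← inv_pow] at this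
    refine (Measure.hausdorffMeasure_le_liminf_sum (l := Filter.atTop) _ _
      (fun n : ℕ => ENNReal.ofReal (((p:ℝ)⁻¹) ^ n)) ?_ t ?_ ?_).trans ?_
    · have : Filter.Tendsto (fun n : ℕ => ((p:ℝ)⁻¹) ^ n) Filter.atTop (nhds 0) :=
        tendsto_pow_atTop_nhds_zero_of_lt_one (by positivity) (inv_lt_one_of_one_lt₀ hp1)
      simpa using ENNReal.tendsto_ofReal this
    · exact Filter.Eventually.of_forall hdiam
    · refine Filter.Eventually.of_forall fun n x _ => ?_
      rw [Set.mem_iUnion]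
      refine ⟨fun s => ⟨(x s).appr n, PadicInt.appr_lt _ _⟩, fun s => ?_⟩
      exact (PadicInt.norm_le_pow_iff_mem_span_pow _ _).2 (PadicInt.appr_spec n (x s))
    · refine (Filter.liminf_le_liminf (v := fun _ => (1:ℝ≥0∞)) ?_).trans ?_
      · refine Filter.Eventually.of_forall fun n => ?_
        calc ∑ g, Metric.ediam (t n g) ^ (((N : NNReal) : ℝ))
            ≤ ∑ g : Fin N → Fin (p ^ n), ENNReal.ofReal (((p:ℝ)⁻¹) ^ n) ^ (((N : NNReal) : ℝ)) := by
              refine Finset.sum_le_sum fun g _ => ?_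
              exact ENNReal.rpow_le_rpow (hdiam n g) (by positivity)
          _ = 1 := by
              rw [Finset.sum_const, Finset.card_univ, Fintype.card_fun, Fintype.card_fin,
                Fintype.card_fin, NNReal.coe_natCast, ENNReal.rpow_natCast,
                ← ENNReal.ofReal_pow (by positivity), nsmul_eq_mul]
              rw [← ENNReal.ofReal_natCast, ← ENNReal.ofReal_mul (by positivity)]
              push_cast
              rw [inv_pow, inv_pow, mul_inv_cancel₀ (by positivity), ENNReal.ofReal_one]
      · simp
  simpa using this

end
end BadPadic

/-- Let `p` be a prime. For any `N`-tuple of weights `(i₁, …, i_N)` with `i_s ≥ 0` and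
`i₁ + ⋯ + i_N = 1`, the set `Bad_{ℤ_p}(i₁, …, i_N) ⊆ ℤ_p^N` — the set of points
`x ∈ ℤ_p^N` for which there exists `c > 0` such that for every
`((r₁, …, r_N), q) ∈ ℤ^N × (ℤ ∖ {0})`,
`max{|q x_s - r_s|_p^(1/(1+i_s)) : 1 ≤ s ≤ N} ≥ c / max{|r₁|, …, |r_N|, |q|}` — has
Hausdorff dimension `N`.  (`ℤ_p^N` carries the sup metric coming from the `p`-adic metric.) -/
theorem dimH_badPadic_eq (p : ℕ) [Fact p.Prime] (N : ℕ) (i : Fin N → ℝ)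
    (hi : ∀ s, 0 ≤ i s) (hsum : ∑ s, i s = 1) :
    dimH {x : Fin N → ℤ_[p] | ∃ c : ℝ, 0 < c ∧
      ∀ (r : Fin N → ℤ) (q : ℤ), q ≠ 0 →
        ∃ s : Fin N,
          c / max |(q : ℝ)| (⨆ t : Fin N, |(r t : ℝ)|) ≤
            ‖(q : ℤ_[p]) * x s - (r s : ℤ_[p])‖ ^ (1 / (1 + i s))} = (N : ℝ≥0∞) := by
  have hN : 1 ≤ N := by
    rcases Nat.eq_zero_or_pos N with rfl | h
    · simp at hsum
    · exact h
  letI : MeasurableSpace (Fin N → ℤ_[p]) := borel _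
  haveI : BorelSpace (Fin N → ℤ_[p]) := ⟨rfl⟩
  refine le_antisymm (BadPadic.upper _) ?_
  have hlim : Filter.Tendsto (fun m : ℕ => ENNReal.ofReal ((N : ℝ) - 1 / m)) Filter.atTop
      (nhds (ENNReal.ofReal ((N : ℝ) - 0))) :=
    ENNReal.tendsto_ofReal (tendsto_const_nhds.sub tendsto_one_div_atTop_nhds_zero_nat)
  rw [sub_zero, ENNReal.ofReal_natCast] at hlim
  refine le_of_tendsto hlim ?_
  filter_upwards [Filter.eventually_ge_atTop 2] with m hm
  exact BadPadic.lower i hi hsum m hm hN _ fun x hx => BadPadic.bad_of i hi m (by omega) x hx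
end

section
/- Let 𝔽 be a finite field with h elements. For any N-tuple (i₁,…,i_N) with i_r ≥ 0 and i₁+⋯+i_N = 1, the set Bad_{𝔽((X⁻¹))}(i₁,…,i_N) ⊆ 𝔽((X⁻¹))^N has Hausdorff dimension N. -/
open scoped ENNReal Classical

/-- The field `𝔽((X⁻¹))` of formal power series in `X⁻¹` over `𝔽` is modelled as the field
of formal Laurent series `LaurentSeries 𝔽 = HahnSeries ℤ 𝔽` in the variable `T = X⁻¹`; an
element `f = Σ_{i = -n}^∞ a_{-i} X^{-i} = Σ_{i ≥ -n} a_{-i} T^i` with `a_n ≠ 0` has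
`T`-order `-n` and absolute value `‖f‖ = hⁿ = h^{-ord f}`, where `h = #𝔽`. -/
noncomputable def lsAbs (F : Type*) [Field F] [Fintype F] (f : LaurentSeries F) : ℝ :=
  if f = 0 then 0 else (Fintype.card F : ℝ) ^ (-f.order)

lemma lsAbs_nonneg (F : Type*) [Field F] [Fintype F] (f : LaurentSeries F) :
    0 ≤ lsAbs F f := by
  unfold lsAbs
  split
  · exact le_rfl
  · exact (zpow_pos (by exact_mod_cast Fintype.card_pos) _).le

lemma lsAbs_neg (F : Type*) [Field F] [Fintype F] (f : LaurentSeries F) :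
    lsAbs F (-f) = lsAbs F f := by
  unfold lsAbs
  rw [neg_eq_zero, HahnSeries.order_neg]

lemma lsAbs_add_le (F : Type*) [Field F] [Fintype F] (f g : LaurentSeries F) :
    lsAbs F (f + g) ≤ max (lsAbs F f) (lsAbs F g) := by
  by_cases hfg : f + g = 0
  · rw [hfg]
    rw [show lsAbs F 0 = 0 by rw [lsAbs, if_pos rfl]]
    exact le_max_of_le_left (lsAbs_nonneg F f)
  by_cases hf : f = 0
  · rw [hf, zero_add]; exact le_max_right _ _
  by_cases hg : g = 0
  · rw [hg, add_zero]; exact le_max_left _ _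
  have hcard : (1 : ℝ) ≤ (Fintype.card F : ℝ) := by exact_mod_cast Fintype.card_pos
  have horder := HahnSeries.min_order_le_order_add hfg
  rw [lsAbs, if_neg hfg, lsAbs, if_neg hf, lsAbs, if_neg hg]
  rcases le_total f.order g.order with h | h
  · have h1 : f.order ≤ (f + g).order := le_trans (by simp [min_eq_left h]) horder
    exact le_max_of_le_left (zpow_le_zpow_right₀ hcard (neg_le_neg h1))
  · have h1 : g.order ≤ (f + g).order := le_trans (by simp [min_eq_right h]) horder
    exact le_max_of_le_right (zpow_le_zpow_right₀ hcard (neg_le_neg h1))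

lemma lsAbs_eq_zero (F : Type*) [Field F] [Fintype F] {f : LaurentSeries F}
    (h : lsAbs F f = 0) : f = 0 := by
  by_contra hne
  rw [lsAbs, if_neg hne] at h
  exact absurd h (ne_of_gt (zpow_pos (by exact_mod_cast Fintype.card_pos) _))

/-- The metric on `𝔽((X⁻¹))` induced by the absolute value `‖·‖`. -/
noncomputable def lsMetricSpace (F : Type*) [Field F] [Fintype F] :
    MetricSpace (LaurentSeries F) where
  dist f g := lsAbs F (f - g)
  dist_self f := by
    show lsAbs F (f - f) = 0
    rw [sub_self, lsAbs, if_pos rfl]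
  dist_comm f g := by
    show lsAbs F (f - g) = lsAbs F (g - f)
    rw [← lsAbs_neg F (f - g), neg_sub]
  dist_triangle f g k := by
    show lsAbs F (f - k) ≤ lsAbs F (f - g) + lsAbs F (g - k)
    have h1 : lsAbs F (f - k) = lsAbs F ((f - g) + (g - k)) := by
      rw [sub_add_sub_cancel]
    rw [h1]
    exact le_trans (lsAbs_add_le F _ _)
      (max_le_add_of_nonneg (lsAbs_nonneg F _) (lsAbs_nonneg F _))
  eq_of_dist_eq_zero := by
    intro f g hd
    have : f - g = 0 := lsAbs_eq_zero F hd
    exact sub_eq_zero.mp this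

/-- The embedding of the polynomial ring `𝔽[X]` into `𝔽((X⁻¹))`: the variable `X` is sent to
`T⁻¹ = HahnSeries.single (-1) 1`, the inverse of the variable `T = X⁻¹` of the Laurent
series field. -/
noncomputable def polyToLS (F : Type*) [Field F] [Fintype F] :
    Polynomial F →+* LaurentSeries F :=
  (Polynomial.aeval (HahnSeries.single (-1 : ℤ) (1 : F) : LaurentSeries F)).toRingHom


namespace BadLS

open MeasureTheory Filter

/-- All coefficients of `f` below `n` vanish, i.e. `‖f‖ ≤ h^{-n}`. -/
def OGE {F : Type*} [Field F] (n : ℤ) (f : LaurentSeries F) : Prop :=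
  ∀ j : ℤ, j < n → f.coeff j = 0

section O
variable {F : Type*} [Field F]

lemma OGE_iff {n : ℤ} {f : LaurentSeries F} : OGE n f ↔ (n : WithTop ℤ) ≤ f.orderTop := by
  rw [HahnSeries.le_orderTop_iff_forall]
  simp only [OGE, WithTop.coe_lt_coe]

lemma OGE.mono {n m : ℤ} {f : LaurentSeries F} (h : OGE n f) (hm : m ≤ n) : OGE m f :=
  fun j hj => h j (lt_of_lt_of_le hj hm)

lemma OGE_zero (n : ℤ) : OGE n (0 : LaurentSeries F) := fun _ _ => rfl

lemma OGE.add {n : ℤ} {f g : LaurentSeries F} (hf : OGE n f) (hg : OGE n g) : OGE n (f + g) :=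
  fun j hj => by rw [HahnSeries.coeff_add, hf j hj, hg j hj, add_zero]

lemma OGE.sub {n : ℤ} {f g : LaurentSeries F} (hf : OGE n f) (hg : OGE n g) : OGE n (f - g) :=
  fun j hj => by rw [HahnSeries.coeff_sub, hf j hj, hg j hj, sub_zero]

lemma OGE_sub_comm {n : ℤ} {f g : LaurentSeries F} (hf : OGE n (f - g)) : OGE n (g - f) := by
  have := (OGE_zero n).sub hf
  rwa [zero_sub, neg_sub] at this

lemma OGE_sum {ι : Type*} (s : Finset ι) {n : ℤ} {f : ι → LaurentSeries F}
    (hf : ∀ i ∈ s, OGE n (f i)) : OGE n (∑ i ∈ s, f i) := by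
  induction s using Finset.induction_on with
  | empty => simpa using OGE_zero n
  | insert a s ha ih =>
    rw [Finset.sum_insert ha]
    exact (hf a (by simp)).add (ih fun i hi => hf i (by simp [hi]))

lemma OGE.mul {n m : ℤ} {f g : LaurentSeries F} (hf : OGE n f) (hg : OGE m g) :
    OGE (n + m) (f * g) := by
  rw [OGE_iff] at *
  rw [HahnSeries.orderTop_mul, WithTop.coe_add]
  exact add_le_add hf hg

lemma OGE_order {n : ℤ} {f : LaurentSeries F} (hf : f ≠ 0) : OGE n f ↔ n ≤ f.order := by
  rw [OGE_iff, ← HahnSeries.order_eq_orderTop_of_ne_zero hf, WithTop.coe_le_coe]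

lemma OGE_div {n : ℤ} {f g : LaurentSeries F} (hf : f ≠ 0) (h : OGE n (f * g)) :
    OGE (n - f.order) g := by
  by_cases hg : g = 0
  · rw [hg]; exact OGE_zero _
  rw [OGE_order (mul_ne_zero hf hg), HahnSeries.order_mul hf hg] at h
  rw [OGE_order hg]
  linarith

end O

section P
variable {F : Type*} [Field F] [Fintype F]

lemma one_lt_h : (1 : ℝ) < (Fintype.card F : ℝ) := by exact_mod_cast Fintype.one_lt_card

lemma lsAbs_le_iff (n : ℤ) (f : LaurentSeries F) :
    lsAbs F f ≤ (Fintype.card F : ℝ) ^ (-n) ↔ OGE n f := by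
  by_cases hf : f = 0
  · subst hf
    simp only [OGE_zero, iff_true, lsAbs, if_true]
    exact (zpow_pos (by linarith [one_lt_h (F := F)]) _).le
  · rw [lsAbs, if_neg hf, OGE_order hf, zpow_le_zpow_iff_right₀ one_lt_h]
    omega

lemma coeff_smul_aux (c : F) (f : LaurentSeries F) (j : ℤ) :
    (@HSMul.hSMul F (LaurentSeries F) _ (@instHSMul _ _
      (@Algebra.toSMul _ _ _ _ (HahnSeries.powerSeriesAlgebra ℤ F))) c f).coeff j
      = c * f.coeff j := by
  rw [Algebra.smul_def, HahnSeries.algebraMap_apply']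
  simp

lemma polyToLS_coeff_nat (q : Polynomial F) (j : ℕ) :
    (polyToLS F q).coeff (-(j : ℤ)) = q.coeff j := by
  rw [polyToLS]
  simp only [AlgHom.toRingHom_eq_coe, RingHom.coe_coe, Polynomial.aeval_eq_sum_range,
    HahnSeries.single_pow, HahnSeries.coeff_sum, coeff_smul_aux, one_pow,
    HahnSeries.coeff_single]
  simp
  intro h
  exact (Polynomial.coeff_eq_zero_of_natDegree_lt (by omega)).symm

lemma polyToLS_coeff_pos (q : Polynomial F) (j : ℤ) (hj : 0 < j) :
    (polyToLS F q).coeff j = 0 := by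
  rw [polyToLS]
  simp only [AlgHom.toRingHom_eq_coe, RingHom.coe_coe, Polynomial.aeval_eq_sum_range,
    HahnSeries.single_pow, HahnSeries.coeff_sum, coeff_smul_aux, one_pow,
    HahnSeries.coeff_single]
  apply Finset.sum_eq_zero
  intro x _
  rw [if_neg, mul_zero]
  simp
  omega

lemma polyToLS_OGE (q : Polynomial F) (n : ℕ) (hn : q.natDegree ≤ n) :
    OGE (-(n : ℤ)) (polyToLS F q) := by
  intro j hj
  obtain ⟨k, rfl⟩ : ∃ k : ℕ, j = -(k : ℤ) := ⟨(-j).toNat, by omega⟩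
  rw [polyToLS_coeff_nat]
  exact Polynomial.coeff_eq_zero_of_natDegree_lt (by omega)

lemma poly_eq_zero_of_OGE (q : Polynomial F) (h : OGE 1 (polyToLS F q)) : q = 0 := by
  ext j
  rw [← polyToLS_coeff_nat, h _ (by omega), Polynomial.coeff_zero]

lemma polyToLS_ne_zero (q : Polynomial F) (hq : q ≠ 0) : polyToLS F q ≠ 0 := by
  intro h
  apply hq
  apply poly_eq_zero_of_OGE
  rw [h]; exact OGE_zero _

lemma polyToLS_order (q : Polynomial F) (hq : q ≠ 0) :
    (polyToLS F q).order = -(q.natDegree : ℤ) := by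
  apply le_antisymm
  · apply HahnSeries.order_le_of_coeff_ne_zero
    rw [polyToLS_coeff_nat]
    simpa using hq
  · rw [← OGE_order (polyToLS_ne_zero q hq)]
    exact polyToLS_OGE q _ le_rfl

/-- polynomial part -/
lemma exists_polyPart (f : LaurentSeries F) :
    ∃ P : Polynomial F, OGE 1 (f - polyToLS F P) := by
  obtain ⟨n, hn⟩ : ∃ n : ℕ, OGE (-(n : ℤ)) f := by
    by_cases hf : f = 0
    · exact ⟨0, by rw [hf]; exact OGE_zero _⟩
    · exact ⟨(-f.order).toNat, by rw [OGE_order hf]; omega⟩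
  refine ⟨∑ j ∈ Finset.range (n + 1), Polynomial.monomial j (f.coeff (-(j : ℤ))), ?_⟩
  intro j hj
  obtain ⟨k, rfl⟩ : ∃ k : ℕ, j = -(k : ℤ) := ⟨(-j).toNat, by omega⟩
  rw [HahnSeries.coeff_sub, polyToLS_coeff_nat]
  simp only [Polynomial.finsetSum_coeff, Polynomial.coeff_monomial, Finset.sum_ite_eq',
    Finset.mem_range]
  split_ifs with h
  · simp
  · rw [hn _ (by omega)]; simp

end P

section Key
variable {F : Type*} [Field F] [Fintype F]

lemma polyToLS_smul_coeff (a : F) (p : Polynomial F) (f : LaurentSeries F) (j : ℤ) :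
    (polyToLS F (a • p) * f).coeff j = a * (polyToLS F p * f).coeff j := by
  rw [Polynomial.smul_eq_C_mul, map_mul, mul_assoc]
  have : polyToLS F (Polynomial.C a) = HahnSeries.C a := by
    rw [polyToLS]
    simp [HahnSeries.algebraMap_apply']
  rw [this, HahnSeries.C_mul_eq_smul, HahnSeries.coeff_smul, smul_eq_mul]

lemma exists_linform {N : ℕ} (d : ℕ) (hd0 : 0 < d) (n : Fin N → ℕ) (hd : d ≤ ∑ r, n r)
    (c : Fin N → LaurentSeries F) :
    ∃ (b0 : Polynomial F) (b : Fin N → Polynomial F), (∃ r, b r ≠ 0) ∧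
      (∀ r, b r ≠ 0 → (b r).natDegree < n r) ∧
      OGE d (polyToLS F b0 + ∑ r, polyToLS F (b r) * c r) := by
  let B : ((r : Fin N) → (Fin (n r) → F)) → Fin N → Polynomial F :=
    fun β r => ((Polynomial.degreeLTEquiv F (n r)).symm (β r)).1
  have hBadd : ∀ β γ r, B (β + γ) r = B β r + B γ r := by intro β γ r; simp [B]
  have hBsmul : ∀ (a : F) β r, B (a • β) r = a • B β r := by intro a β r; simp [B]
  let L : ((r : Fin N) → (Fin (n r) → F)) →ₗ[F] (Fin (d - 1) → F) :=
    { toFun := fun β j => (∑ r, polyToLS F (B β r) * c r).coeff ((j : ℤ) + 1)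
      map_add' := by
        intro β γ
        funext j
        simp only [hBadd, map_add, add_mul, Finset.sum_add_distrib, HahnSeries.coeff_add,
          Pi.add_apply]
      map_smul' := by
        intro a β
        funext j
        simp only [hBsmul, HahnSeries.coeff_sum, polyToLS_smul_coeff, Pi.smul_apply,
          RingHom.id_apply, smul_eq_mul, Finset.mul_sum] }
  have hker : L.ker ≠ ⊥ := by
    apply LinearMap.ker_ne_bot_of_finrank_lt
    have e1 : Module.finrank F ((r : Fin N) → (Fin (n r) → F)) = ∑ r, n r := by
      rw [Module.finrank_pi_fintype]
      exact Finset.sum_congr rfl fun r _ => by simp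
    rw [e1, Module.finrank_fintype_fun_eq_card, Fintype.card_fin]
    omega
  obtain ⟨β, hβ, hβ0⟩ := (Submodule.ne_bot_iff _).1 hker
  obtain ⟨P, hP⟩ := exists_polyPart (∑ r, polyToLS F (B β r) * c r)
  refine ⟨-P, B β, ?_, ?_, ?_⟩
  · by_contra hcon
    push Not at hcon
    apply hβ0
    funext r
    have h1 := hcon r
    have h2 : (Polynomial.degreeLTEquiv F (n r)).symm (β r) = 0 := Subtype.ext h1
    simpa using h2
  · intro r hr
    have := ((Polynomial.degreeLTEquiv F (n r)).symm (β r)).2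
    rw [Polynomial.mem_degreeLT] at this
    exact (Polynomial.natDegree_lt_iff_degree_lt hr).2 this
  · rw [map_neg, neg_add_eq_sub]
    intro j hj
    rcases lt_or_ge j 1 with h | h
    · exact hP j h
    · rw [HahnSeries.coeff_sub, polyToLS_coeff_pos _ _ (by omega), sub_zero]
      have h3 : L β = 0 := hβ
      have h4 : (∑ r, polyToLS F (B β r) * c r).coeff ((((j - 1).toNat : ℕ) : ℤ) + 1) = 0 :=
        congrFun h3 ⟨(j - 1).toNat, by omega⟩
      have h5 : (((j - 1).toNat : ℕ) : ℤ) + 1 = j := by omega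
      rwa [h5] at h4

/-- `x` is dangerously close to a rational point. -/
def Danger {N : ℕ} (S : Fin N → Prop) (d' d : ℕ) (β : Fin N → ℕ)
    (x : Fin N → LaurentSeries F) : Prop :=
  ∃ (q : Polynomial F) (p : Fin N → Polynomial F), q ≠ 0 ∧ d' ≤ q.natDegree ∧ q.natDegree < d ∧
    ∀ r, S r → OGE ((β r : ℤ) - d') (polyToLS F q * x r - polyToLS F (p r))

def Hazard {N : ℕ} (S : Fin N → Prop) (d' d : ℕ) (α β : Fin N → ℕ)
    (c v : Fin N → LaurentSeries F) : Prop :=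
  ∃ x : Fin N → LaurentSeries F, (∀ r, OGE (α r) (x r - c r)) ∧ (∀ r, OGE (β r) (x r - v r)) ∧
    Danger S d' d β x

lemma key {N : ℕ} (S : Fin N → Prop) (d' d : ℕ) (hd0 : 0 < d) (_hdd : d' ≤ d)
    (n α β : Fin N → ℕ) (hd : d ≤ ∑ r, n r)
    (hS : ∀ r, n r ≠ 0 → S r) (hα : ∀ r, α r = d + n r) (hαβ : ∀ r, α r < β r)
    (c : Fin N → LaurentSeries F) :
    ∃ r₀ : Fin N, ∀ v v' : Fin N → LaurentSeries F, Hazard S d' d α β c v →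
      Hazard S d' d α β c v' → (∀ r, r ≠ r₀ → v' r = v r) →
      v' r₀ - v r₀ = HahnSeries.single (α r₀ : ℤ) 1 → False := by
  obtain ⟨b0, b, ⟨r₁, hr₁⟩, hbdeg, hO⟩ := exists_linform d hd0 n hd c
  obtain ⟨r₀, hr₀, hmin⟩ := Finset.exists_min_image
    (Finset.univ.filter (fun r => b r ≠ 0)) (fun r => (β r : ℤ) - (b r).natDegree)
    ⟨r₁, by simpa using hr₁⟩
  have hb0 : b r₀ ≠ 0 := by simpa using hr₀
  have hmin' : ∀ r, b r ≠ 0 → (β r₀ : ℤ) - (b r₀).natDegree ≤ (β r : ℤ) - (b r).natDegree :=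
    fun r hr => hmin r (by simpa using hr)
  have main : ∀ v, Hazard S d' d α β c v →
      OGE ((β r₀ : ℤ) - (b r₀).natDegree)
        (polyToLS F b0 + ∑ r, polyToLS F (b r) * v r) := by
    rintro v ⟨x, hxc, hxv, q, p, hq0, hq1, hq2, hq⟩
    -- the integer combination vanishes
    have hz : b0 * q + ∑ r, b r * p r = 0 := by
      apply poly_eq_zero_of_OGE
      have e : polyToLS F (b0 * q + ∑ r, b r * p r) =
          polyToLS F q * (polyToLS F b0 + ∑ r, polyToLS F (b r) * c r)
          + ∑ r, polyToLS F (b r) * (polyToLS F q * (x r - c r))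
          - ∑ r, polyToLS F (b r) * (polyToLS F q * x r - polyToLS F (p r)) := by
        rw [map_add, map_mul, map_sum]
        simp only [map_mul, mul_sub, mul_add, Finset.sum_sub_distrib, Finset.mul_sum]
        have : ∀ r, polyToLS F q * (polyToLS F (b r) * c r)
          = polyToLS F (b r) * (polyToLS F q * c r) := fun r => by ring
        simp only [this]
        ring
      rw [e]
      have hqO := polyToLS_OGE q (d - 1) (by omega)
      refine OGE.sub (OGE.add ?_ ?_) ?_
      · exact (hqO.mul hO).mono (by omega)
      · apply OGE_sum
        intro r _
        by_cases hr : b r = 0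
        · rw [hr, map_zero, zero_mul]; exact OGE_zero _
        have h1 := hbdeg r hr
        refine ((polyToLS_OGE (b r) _ le_rfl).mul (hqO.mul (hxc r))).mono ?_
        have := hα r
        omega
      · apply OGE_sum
        intro r _
        by_cases hr : b r = 0
        · rw [hr, map_zero, zero_mul]; exact OGE_zero _
        have h1 := hbdeg r hr
        refine ((polyToLS_OGE (b r) _ le_rfl).mul (hq r (hS r (by omega)))).mono ?_
        have := hα r
        have := hαβ r
        omega
    have hx : OGE ((β r₀ : ℤ) - (b r₀).natDegree)
        (polyToLS F b0 + ∑ r, polyToLS F (b r) * x r) := by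
      have e : polyToLS F q * (polyToLS F b0 + ∑ r, polyToLS F (b r) * x r) =
          ∑ r, polyToLS F (b r) * (polyToLS F q * x r - polyToLS F (p r)) := by
        have hz' := congrArg (polyToLS F) hz
        rw [map_add, map_mul, map_sum, map_zero] at hz'
        simp only [map_mul] at hz'
        simp only [mul_sub, mul_add, Finset.sum_sub_distrib, Finset.mul_sum]
        have : ∀ r, polyToLS F q * (polyToLS F (b r) * x r)
          = polyToLS F (b r) * (polyToLS F q * x r) := fun r => by ring
        simp only [this]
        linear_combination hz'
      have h2 : OGE ((β r₀ : ℤ) - (b r₀).natDegree - d')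
          (polyToLS F q * (polyToLS F b0 + ∑ r, polyToLS F (b r) * x r)) := by
        rw [e]
        apply OGE_sum
        intro r _
        by_cases hr : b r = 0
        · rw [hr, map_zero, zero_mul]; exact OGE_zero _
        have h1 := hbdeg r hr
        refine ((polyToLS_OGE (b r) _ le_rfl).mul (hq r (hS r (by omega)))).mono ?_
        have := hmin' r hr
        omega
      refine (OGE_div (polyToLS_ne_zero q hq0) h2).mono ?_
      rw [polyToLS_order q hq0]
      omega
    have e : polyToLS F b0 + ∑ r, polyToLS F (b r) * v r =
        (polyToLS F b0 + ∑ r, polyToLS F (b r) * x r)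
          - ∑ r, polyToLS F (b r) * (x r - v r) := by
      simp only [mul_sub, Finset.sum_sub_distrib]
      ring
    rw [e]
    refine hx.sub (OGE_sum _ ?_)
    intro r _
    by_cases hr : b r = 0
    · rw [hr, map_zero, zero_mul]; exact OGE_zero _
    refine ((polyToLS_OGE (b r) _ le_rfl).mul (hxv r)).mono ?_
    have := hmin' r hr
    omega
  refine ⟨r₀, fun v v' hv hv' hne he => ?_⟩
  have h := (main v' hv').sub (main v hv)
  have e : (polyToLS F b0 + ∑ r, polyToLS F (b r) * v' r)
      - (polyToLS F b0 + ∑ r, polyToLS F (b r) * v r)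
      = polyToLS F (b r₀) * HahnSeries.single (α r₀ : ℤ) 1 := by
    rw [← he, add_sub_add_left_eq_sub, ← Finset.sum_sub_distrib]
    rw [Finset.sum_eq_single r₀]
    · ring
    · intro r _ hr
      rw [hne r hr, sub_self]
    · intro h; exact absurd (Finset.mem_univ _) h
  rw [e] at h
  have h3 := OGE_div (polyToLS_ne_zero _ hb0) h
  rw [polyToLS_order _ hb0] at h3
  have h4 := h3 (α r₀) (by have := hαβ r₀; omega)
  simp at h4

end Key

section Tree
variable {F : Type*} [Field F] [Fintype F]

/-- digits in the `k`-th block -/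
abbrev Dig (F : Type*) {N : ℕ} (a : ℕ → Fin N → ℕ) (k : ℕ) : Type _ :=
  (r : Fin N) → (Fin (a (k + 1) r - a k r) → F)

/-- replace the `k`-th block of digits of `y` by `e` -/
def extd {N : ℕ} (a : ℕ → Fin N → ℕ) (k : ℕ) (y : Fin N → ℕ → F) (e : Dig F a k) :
    Fin N → ℕ → F :=
  fun r j => if h : a k r ≤ j ∧ j < a (k + 1) r then e r ⟨j - a k r, by omega⟩ else y r j

def treePath {N : ℕ} (a : ℕ → Fin N → ℕ) (M : ℕ → ℕ)
    (g : (k : ℕ) → (Fin N → ℕ → F) → Fin (M k) → Dig F a k) (ω : (k : ℕ) → Fin (M k)) :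
    ℕ → Fin N → ℕ → F
  | 0 => 0
  | k + 1 => extd a k (treePath a M g ω k) (g k (treePath a M g ω k) (ω k))

lemma card_dig {N : ℕ} (a : ℕ → Fin N → ℕ) (k : ℕ) :
    Fintype.card (Dig F a k) = Fintype.card F ^ (∑ r, (a (k + 1) r - a k r)) := by
  rw [Fintype.card_pi, ← Finset.prod_pow_eq_pow_sum]
  apply Finset.prod_congr rfl
  intro r _
  simp

lemma tree {N : ℕ} (a : ℕ → Fin N → ℕ) (ha0 : ∀ r, a 0 r = 0)
    (ha : ∀ k r, a k r < a (k + 1) r)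
    (Safe : ℕ → (Fin N → ℕ → F) → (Fin N → ℕ → F) → Prop)
    (hcount : ∀ k y, Fintype.card (Dig F a k) ≤
      2 * (Finset.univ.filter (fun e : Dig F a k => Safe k y (extd a k y e))).card) :
    ∃ M : ℕ → ℕ, (∀ k, 0 < M k) ∧
      (∀ k, Fintype.card F ^ (∑ r, a k r) ≤ 2 ^ k * ∏ j ∈ Finset.range k, M j) ∧
      ∃ c : ((k : ℕ) → Fin (M k)) → ℕ → Fin N → ℕ → F,
        (∀ ω k r j, j < a k r → ∀ k', k ≤ k' → c ω k' r j = c ω k r j) ∧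
        (∀ ω k, Safe k (c ω k) (c ω (k + 1))) ∧
        (∀ ω ω' k, (∀ r j, j < a k r → c ω k r j = c ω' k r j) → ∀ j, j < k → ω j = ω' j) ∧
        (∀ ω ω' k, (∀ j, j < k → ω j = ω' j) → c ω k = c ω' k) := by
  have hpos : ∀ k, 0 < Fintype.card (Dig F a k) := fun k => Fintype.card_pos
  let M : ℕ → ℕ := fun k => (Fintype.card (Dig F a k) + 1) / 2
  have hg : ∀ k y, ∃ g : Fin (M k) → Dig F a k, Function.Injective g ∧
      ∀ t, Safe k y (extd a k y (g t)) := by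
    intro k y
    have h1 : Fintype.card (Fin (M k)) ≤
      Fintype.card (Finset.univ.filter (fun e : Dig F a k => Safe k y (extd a k y e))) := by
      rw [Fintype.card_fin, Fintype.card_coe]
      have := hcount k y
      simp only [M]
      omega
    obtain ⟨f⟩ := Function.Embedding.nonempty_of_card_le h1
    refine ⟨fun t => (f t).1, fun t t' h => f.injective (Subtype.ext h), fun t => ?_⟩
    exact (Finset.mem_filter.1 (f t).2).2
  choose g hginj hgsafe using hg
  have hstable : ∀ ω k r j, j < a k r →
      treePath a M g ω (k + 1) r j = treePath a M g ω k r j := by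
    intro ω k r j hj
    rw [treePath, extd, dif_neg (by omega)]
  have h4 : ∀ ω ω' k, (∀ j, j < k → ω j = ω' j) →
      treePath a M g ω k = treePath a M g ω' k := by
    intro ω ω' k
    induction k with
    | zero => intro _; rfl
    | succ k ih =>
      intro h
      have h1 := ih fun j hj => h j (by omega)
      rw [treePath, treePath, h1, h k (by omega)]
  refine ⟨M, ?_, ?_, treePath a M g, ?_, ?_, ?_, h4⟩
  · intro k
    have := hpos k
    simp only [M]
    omega
  · intro k
    induction k with
    | zero => simp [ha0]
    | succ k ih =>
      have e : ∑ r, a (k + 1) r = ∑ r, a k r + ∑ r, (a (k + 1) r - a k r) := by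
        rw [← Finset.sum_add_distrib]
        exact Finset.sum_congr rfl fun r _ => by have := ha k r; omega
      rw [e, pow_add, ← card_dig, Finset.prod_range_succ, pow_succ]
      have h2 : Fintype.card (Dig F a k) ≤ 2 * M k := by
        simp only [M]; omega
      calc _ ≤ (2 ^ k * ∏ j ∈ Finset.range k, M j) * (2 * M k) := Nat.mul_le_mul ih h2
        _ = _ := by ring
  · intro ω k r j hj k' hk
    induction k', hk using Nat.le_induction with
    | base => rfl
    | succ n hn ih =>
      rw [hstable, ih]
      have : Monotone (fun k => a k r) := monotone_nat_of_le_succ fun k => (ha k r).le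
      exact lt_of_lt_of_le hj (this hn)
  · intro ω k
    rw [treePath]
    exact hgsafe _ _ _
  · intro ω ω' k
    induction k with
    | zero => intro _ j hj; omega
    | succ k ih =>
      intro h
      have h5 := ih fun r j hj => by
        rw [← hstable _ _ _ _ hj, ← hstable _ _ _ _ hj]
        exact h r j (hj.trans (ha k r))
      intro j hj
      rcases Nat.lt_succ_iff_lt_or_eq.1 hj with h6 | rfl
      · exact h5 j h6
      · have h7 := h4 ω ω' j h5
        apply hginj j (treePath a M g ω j)
        funext r t
        have h8 := h r (a j r + t) (by have := t.2; omega)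
        have ht : a j r ≤ a j r + t ∧ a j r + t < a (j + 1) r := by have := t.2; omega
        rw [treePath, treePath, extd, extd, dif_pos ht, dif_pos ht, ← h7] at h8
        simpa using h8

/-- the Laurent series with given digits -/
noncomputable def toLS (y : ℕ → F) : LaurentSeries F :=
  HahnSeries.ofPowerSeries ℤ F (PowerSeries.mk y)

lemma toLS_coeff_nat (y : ℕ → F) (j : ℕ) : (toLS y).coeff (j : ℤ) = y j := by
  rw [toLS, HahnSeries.ofPowerSeries_apply_coeff, PowerSeries.coeff_mk]

lemma toLS_coeff_neg (y : ℕ → F) (j : ℤ) (hj : j < 0) : (toLS y).coeff j = 0 := by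
  rw [toLS, HahnSeries.ofPowerSeries_apply, HahnSeries.embDomain_of_notMem_range]
  rintro ⟨n, hn⟩
  simp at hn
  omega

lemma toLS_OGE_sub (y z : ℕ → F) (n : ℕ) (h : ∀ j, j < n → y j = z j) :
    OGE n (toLS y - toLS z) := by
  intro j hj
  rw [HahnSeries.coeff_sub]
  rcases lt_or_ge j 0 with h0 | h0
  · rw [toLS_coeff_neg _ _ h0, toLS_coeff_neg _ _ h0, sub_zero]
  · obtain ⟨k, rfl⟩ : ∃ k : ℕ, j = k := ⟨j.toNat, by omega⟩
    rw [toLS_coeff_nat, toLS_coeff_nat, h k (by omega), sub_self]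

lemma count_safe {N : ℕ} (S : Fin N → Prop) (a : ℕ → Fin N → ℕ) (k d' d : ℕ)
    (hdd : d' ≤ d) (n : Fin N → ℕ) (hd : d ≤ ∑ r, n r)
    (hS : ∀ r, n r ≠ 0 → S r) (hα : ∀ r, a k r = d + n r) (ha : ∀ r, a k r < a (k + 1) r)
    (y : Fin N → ℕ → F) :
    Fintype.card (Dig F a k) ≤
      2 * (Finset.univ.filter (fun e : Dig F a k =>
        ¬ Hazard S d' d (a k) (a (k + 1)) (fun r => toLS (y r))
          (fun r => toLS (extd a k y e r)))).card := by
  let P : Dig F a k → Prop := fun e => Hazard S d' d (a k) (a (k + 1)) (fun r => toLS (y r))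
          (fun r => toLS (extd a k y e r))
  change _ ≤ 2 * (Finset.univ.filter (fun e => ¬ P e)).card
  have h1 := Finset.card_filter_add_card_filter_not (s := (Finset.univ : Finset (Dig F a k))) P
  rw [Finset.card_univ] at h1
  suffices h : (Finset.univ.filter P).card ≤ (Finset.univ.filter (fun e => ¬ P e)).card by omega
  rcases Nat.eq_zero_or_pos d with h0 | h0
  · have : Finset.univ.filter P = ∅ := by
      apply Finset.filter_false_of_mem
      rintro e _ ⟨x, _, _, q, p, _, _, hq, _⟩
      omega
    rw [this]; simp
  obtain ⟨r₀, hr₀⟩ := key S d' d h0 hdd n (a k) (a (k + 1)) hd hS hα ha (fun r => toLS (y r))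
  let t₀ : Fin (a (k + 1) r₀ - a k r₀) := ⟨0, by have := ha r₀; omega⟩
  let s : Dig F a k := Pi.single r₀ (Pi.single t₀ 1)
  apply Finset.card_le_card_of_injOn (fun e => e + s)
  · intro e he
    have he' : P e := by simpa using he
    simp only [Finset.coe_filter, Finset.mem_univ, true_and, Set.mem_ofPred_eq]
    intro hes
    refine hr₀ _ _ he' hes ?_ ?_
    · intro r hr
      congr 1
      funext j
      simp only [extd, s, Pi.add_apply, Pi.single_eq_of_ne hr, Pi.zero_apply, add_zero]
    · ext j
      rw [HahnSeries.coeff_sub, HahnSeries.coeff_single]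
      rcases lt_or_ge j 0 with h0 | h0
      · rw [toLS_coeff_neg _ _ h0, toLS_coeff_neg _ _ h0, sub_zero, if_neg (by omega)]
      · obtain ⟨i, rfl⟩ : ∃ i : ℕ, j = i := ⟨j.toNat, by omega⟩
        rw [toLS_coeff_nat, toLS_coeff_nat]
        simp only [extd, s, Pi.add_apply, Pi.single_eq_same]
        by_cases hi : a k r₀ ≤ i ∧ i < a (k + 1) r₀
        · rw [dif_pos hi, dif_pos hi, add_sub_cancel_left, Pi.single_apply]
          congr 1
          simp only [t₀, Fin.mk.injEq, Nat.cast_inj, eq_iff_iff]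
          omega
        · rw [dif_neg hi, dif_neg hi, sub_self, if_neg]
          have := ha r₀
          omega
  · intro e _ e' _ h
    exact add_right_cancel h

end Tree

section Mass

lemma mass_distribution {X : Type*} [MetricSpace X] [MeasurableSpace X] [BorelSpace X]
    (μ : Measure X) (H : ℝ) (hH : 1 < H) (d : NNReal) (hd : 0 < d)
    (h : ∀ (x : X) (k : ℕ), μ (Metric.closedBall x (H⁻¹ ^ k)) ≤ ENNReal.ofReal (H⁻¹ ^ k) ^ (d : ℝ))
    (s : Set X) (hs : μ s ≠ 0) : (d : ℝ≥0∞) ≤ dimH s := by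
  have hH0 : 0 < H := by linarith
  have hi0 : 0 < H⁻¹ := inv_pos.2 hH0
  have hi1 : H⁻¹ < 1 := inv_lt_one_of_one_lt₀ hH
  set C : ℝ≥0∞ := ENNReal.ofReal H ^ (d : ℝ) with hC
  have hC0 : C ≠ 0 := by
    rw [hC]; simp [hH0]
  have hCt : C ≠ ⊤ := by
    rw [hC]; exact ENNReal.rpow_ne_top_of_nonneg (by positivity) ENNReal.ofReal_ne_top
  have hle : C⁻¹ • μ ≤ Measure.hausdorffMeasure (d : ℝ) := by
    apply Measure.le_hausdorffMeasure _ _ 1 one_pos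
    intro t ht
    rw [Measure.smul_apply, smul_eq_mul]
    rcases t.eq_empty_or_nonempty with rfl | ⟨x, hx⟩
    · simp
    have hDt : Metric.ediam t ≠ ⊤ := ne_top_of_le_ne_top ENNReal.one_ne_top ht
    have hsub : ∀ ρ : ℝ, Metric.ediam t ≤ ENNReal.ofReal ρ → 0 < ρ → t ⊆ Metric.closedBall x ρ := by
      intro ρ hρ hρ0 y hy
      rw [Metric.mem_closedBall]
      have h1 := (Metric.edist_le_ediam_of_mem hy hx).trans hρ
      rw [edist_dist] at h1
      exact (ENNReal.ofReal_le_ofReal_iff hρ0.le).1 h1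
    rcases eq_or_ne (Metric.ediam t) 0 with h0 | h0
    · have : μ t = 0 := by
        have hlim : Tendsto (fun k : ℕ => ENNReal.ofReal (H⁻¹ ^ k) ^ (d : ℝ)) atTop (nhds 0) := by
          have h1 : Tendsto (fun k : ℕ => ENNReal.ofReal (H⁻¹ ^ k)) atTop (nhds 0) := by
            rw [← ENNReal.ofReal_zero]
            exact ENNReal.tendsto_ofReal (tendsto_pow_atTop_nhds_zero_of_lt_one hi0.le hi1)
          have h2 := h1.ennrpow_const (d : ℝ)
          rwa [ENNReal.zero_rpow_of_pos (by exact_mod_cast hd)] at h2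
        refine le_antisymm (ge_of_tendsto' hlim fun k => ?_) bot_le
        refine (measure_mono (hsub (H⁻¹ ^ k) ?_ (by positivity))).trans (h x k)
        rw [h0]; exact bot_le
      rw [this, mul_zero]; exact bot_le
    · set D := (Metric.ediam t).toReal with hD
      have hD0 : 0 < D := ENNReal.toReal_pos h0 hDt
      have hDe : Metric.ediam t = ENNReal.ofReal D := (ENNReal.ofReal_toReal hDt).symm
      have hD1 : D ≤ 1 := by
        rw [hDe, ← ENNReal.ofReal_one] at ht
        exact (ENNReal.ofReal_le_ofReal_iff zero_le_one).1 ht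
      obtain ⟨k, hk1, hk2⟩ := exists_nat_pow_near_of_lt_one hD0 hD1 hi0 hi1
      have h3 : μ t ≤ ENNReal.ofReal (H⁻¹ ^ k) ^ (d : ℝ) := by
        refine (measure_mono (hsub (H⁻¹ ^ k) ?_ (by positivity))).trans (h x k)
        rw [hDe]; exact ENNReal.ofReal_le_ofReal hk2
      have h4 : ENNReal.ofReal (H⁻¹ ^ k) ^ (d : ℝ) ≤ C * Metric.ediam t ^ (d : ℝ) := by
        rw [hC, ← ENNReal.mul_rpow_of_nonneg _ _ (by positivity), hDe,
          ← ENNReal.ofReal_mul hH0.le]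
        apply ENNReal.rpow_le_rpow _ (by positivity)
        apply ENNReal.ofReal_le_ofReal
        rw [pow_succ] at hk1
        calc H⁻¹ ^ k = H * (H⁻¹ ^ k * H⁻¹) := by field_simp
          _ ≤ H * D := by gcongr
      calc C⁻¹ * μ t ≤ C⁻¹ * (C * Metric.ediam t ^ (d : ℝ)) := by gcongr; exact h3.trans h4
        _ = Metric.ediam t ^ (d : ℝ) := by
          rw [← mul_assoc, ENNReal.inv_mul_cancel hC0 hCt, one_mul]
  apply le_dimH_of_hausdorffMeasure_ne_zero
  intro h0
  have h1 := hle s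
  rw [h0, Measure.smul_apply, smul_eq_mul] at h1
  have h2 : C⁻¹ * μ s = 0 := le_antisymm h1 bot_le
  rcases mul_eq_zero.1 h2 with h3 | h3
  · exact hCt (ENNReal.inv_eq_zero.1 h3)
  · exact hs h3

/-- the product measure -/
noncomputable def prodMeas (M : ℕ → ℕ) [∀ k, NeZero (M k)] : Measure ((k : ℕ) → Fin (M k)) :=
  Measure.infinitePi (fun k => (PMF.uniformOfFintype (Fin (M k))).toMeasure)

instance (M : ℕ → ℕ) [∀ k, NeZero (M k)] : IsProbabilityMeasure (prodMeas M) := by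
  unfold prodMeas; infer_instance

lemma prodMeas_cyl (M : ℕ → ℕ) [∀ k, NeZero (M k)] (w : (k : ℕ) → Fin (M k)) (k : ℕ) :
    prodMeas M {ω | ∀ j, j < k → ω j = w j} = ((∏ j ∈ Finset.range k, M j : ℕ) : ℝ≥0∞)⁻¹ := by
  have e : {ω : (k : ℕ) → Fin (M k) | ∀ j, j < k → ω j = w j}
      = Set.pi (Finset.range k : Set ℕ) (fun j => {w j}) := by
    ext ω
    simp [Set.mem_pi]
  rw [e, prodMeas, Measure.infinitePi_pi _ (fun i _ => measurableSet_singleton _)]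
  push_cast
  rw [ENNReal.prod_inv_distrib]
  · apply Finset.prod_congr rfl
    intro j _
    rw [PMF.toMeasure_apply_singleton _ _ (measurableSet_singleton _)]
    simp
  · intro i _ j _ _
    simp

end Mass

section Main
variable {F : Type*} [Field F] [Fintype F]

/-- `LaurentSeries F` with the metric of the paper -/
def LS (F : Type*) [Field F] [Fintype F] : Type _ := LaurentSeries F

noncomputable instance : MetricSpace (LS F) := lsMetricSpace F

/-- the type synonym map -/
def LS.mk (x : LaurentSeries F) : LS F := x

def LS.get (x : LS F) : LaurentSeries F := x

lemma LS.dist_le (x y : LS F) (n : ℤ) :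
    dist x y ≤ (Fintype.card F : ℝ) ^ (-n) ↔ OGE n (x.get - y.get) :=
  lsAbs_le_iff n _

def badSet (F : Type*) [Field F] [Fintype F] (N : ℕ) (i : Fin N → ℝ) : Set (Fin N → LS F) :=
  {x : Fin N → LS F | ∃ c : ℝ, 0 < c ∧
        ∀ q : Polynomial F, q ≠ 0 → ∀ p : Fin N → Polynomial F,
          ∃ r : Fin N, 0 < i r ∧
            c / lsAbs F (polyToLS F q) ≤
              lsAbs F (polyToLS F q * (x r).get - polyToLS F (p r)) ^ (1 / i r)}

lemma dimH_univ_le (N : ℕ) : dimH (Set.univ : Set (Fin N → LS F)) ≤ (N : ℝ≥0∞) := by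
  borelize (Fin N → LS F)
  have hh := one_lt_h (F := F)
  have hh0 : (0 : ℝ) < Fintype.card F := by linarith
  let A : ℕ → Set (Fin N → LS F) := fun l => {x | ∀ r, OGE (-(l : ℤ)) (x r).get}
  have hA : (Set.univ : Set (Fin N → LS F)) = ⋃ l, A l := by
    symm
    rw [Set.eq_univ_iff_forall]
    intro x
    rw [Set.mem_iUnion]
    have h1 : ∀ r, ∃ n : ℕ, OGE (-(n : ℤ)) (x r).get := by
      intro r
      by_cases hf : (x r).get = 0
      · exact ⟨0, by rw [hf]; exact OGE_zero _⟩
      · exact ⟨(-(x r).get.order).toNat, by rw [OGE_order hf]; omega⟩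
    choose n hn using h1
    refine ⟨∑ r, n r, fun r => (hn r).mono ?_⟩
    have := Finset.single_le_sum (f := n) (fun i _ => Nat.zero_le _) (Finset.mem_univ r)
    omega
  rw [hA, dimH_iUnion]
  apply iSup_le
  intro l
  have hfin : Measure.hausdorffMeasure ((N : NNReal) : ℝ) (A l) ≠ ⊤ := by
    let ρ : ℕ → ℝ≥0∞ := fun n => ENNReal.ofReal ((Fintype.card F : ℝ)⁻¹ ^ n)
    have hρ : Tendsto ρ atTop (nhds 0) := by
      rw [← ENNReal.ofReal_zero]
      exact ENNReal.tendsto_ofReal (tendsto_pow_atTop_nhds_zero_of_lt_one (by positivity)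
        (inv_lt_one_of_one_lt₀ hh))
    let t : (n : ℕ) → (Fin N → Fin (l + n) → F) → Set (Fin N → LS F) := fun n e =>
      {x | ∀ r, OGE (-(l : ℤ)) (x r).get ∧
        ∀ j : Fin (l + n), (x r).get.coeff ((j : ℤ) - l) = e r j}
    have ht : ∀ n e, Metric.ediam (t n e) ≤ ρ n := by
      intro n e
      apply Metric.ediam_le
      intro x hx y hy
      rw [edist_dist]
      apply ENNReal.ofReal_le_ofReal
      rw [dist_pi_le_iff (by positivity)]
      intro r
      have h1 : (Fintype.card F : ℝ)⁻¹ ^ n = (Fintype.card F : ℝ) ^ (-(n : ℤ)) := by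
        rw [zpow_neg, zpow_natCast, inv_pow]
      rw [h1, LS.dist_le]
      intro j hj
      rw [HahnSeries.coeff_sub]
      rcases lt_or_ge j (-(l : ℤ)) with h | h
      · rw [(hx r).1 j h, (hy r).1 j h, sub_zero]
      · have h2 := (hx r).2 ⟨(j + l).toNat, by omega⟩
        have h3 := (hy r).2 ⟨(j + l).toNat, by omega⟩
        have h4 : (((j + l).toNat : ℕ) : ℤ) - l = j := by omega
        simp only [h4] at h2 h3
        rw [h2, h3, sub_self]
    have hcov : ∀ n, A l ⊆ ⋃ e, t n e := by
      intro n x hx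
      rw [Set.mem_iUnion]
      exact ⟨fun r j => (x r).get.coeff ((j : ℤ) - l), fun r => ⟨hx r, fun j => rfl⟩⟩
    have hle := Measure.hausdorffMeasure_le_liminf_sum ((N : NNReal) : ℝ) (A l) ρ hρ t
      (Eventually.of_forall ht) (Eventually.of_forall hcov)
    have hb : ∀ n, ∑ e, Metric.ediam (t n e) ^ ((N : NNReal) : ℝ) ≤
        ((Fintype.card F ^ (l * N) : ℕ) : ℝ≥0∞) := by
      intro n
      calc ∑ e, Metric.ediam (t n e) ^ ((N : NNReal) : ℝ)
          ≤ ∑ e : (Fin N → Fin (l + n) → F), ρ n ^ ((N : NNReal) : ℝ) := by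
            apply Finset.sum_le_sum
            intro e _
            exact ENNReal.rpow_le_rpow (ht n e) (by positivity)
        _ = ((Fintype.card F ^ ((l + n) * N) : ℕ) : ℝ≥0∞) * ρ n ^ N := by
            rw [Finset.sum_const, Finset.card_univ, nsmul_eq_mul, NNReal.coe_natCast,
              ENNReal.rpow_natCast]
            congr 2
            simp [pow_mul]
        _ = ((Fintype.card F ^ (l * N) : ℕ) : ℝ≥0∞) := by
            simp only [ρ]
            rw [← ENNReal.ofReal_pow (by positivity), ← ENNReal.ofReal_natCast,
              ← ENNReal.ofReal_natCast, ← ENNReal.ofReal_mul (by positivity)]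
            congr 1
            push_cast
            rw [add_mul, pow_add, ← pow_mul, inv_pow]
            field_simp
    have h5 : Measure.hausdorffMeasure ((N : NNReal) : ℝ) (A l)
        ≤ ((Fintype.card F ^ (l * N) : ℕ) : ℝ≥0∞) := by
      refine hle.trans ?_
      refine (liminf_le_liminf (Eventually.of_forall hb)).trans ?_
      simp
    exact ne_top_of_le_ne_top (ENNReal.natCast_ne_top _) h5
  have := dimH_le_of_hausdorffMeasure_ne_top hfin
  simpa using this

lemma dimH_bad_ge (N : ℕ) (i : Fin N → ℝ) (hi : ∀ r, 0 ≤ i r) (hsum : ∑ r, i r = 1)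
    (m : ℕ) (hm : 2 ≤ m) (d : NNReal) (hd0 : 0 < d) (hd : (d : ℝ) = N - 1 / m) :
    (d : ℝ≥0∞) ≤ dimH (badSet F N i) := by
  have hh := one_lt_h (F := F)
  have hh2 : 2 ≤ Fintype.card F := Fintype.one_lt_card
  have hh0 : (0 : ℝ) < Fintype.card F := by linarith
  let nn : ℕ → Fin N → ℕ := fun k r => ⌈i r * (m * k : ℕ)⌉₊
  let a : ℕ → Fin N → ℕ := fun k r => m * k + nn k r
  let S : Fin N → Prop := fun r => 0 < i r
  have ha0 : ∀ r, a 0 r = 0 := by intro r; simp [a, nn]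
  have ha : ∀ k r, a k r < a (k + 1) r := by
    intro k r
    have h1 : nn k r ≤ nn (k + 1) r := by
      apply Nat.ceil_mono
      apply mul_le_mul_of_nonneg_left _ (hi r)
      exact_mod_cast Nat.mul_le_mul_left m (Nat.le_succ k)
    have h2 : m * (k + 1) = m * k + m := by ring
    simp only [a]
    omega
  have hka : ∀ k r, k ≤ a k r := by
    intro k r
    simp only [a]
    nlinarith
  have hnn : ∀ k, m * k ≤ ∑ r, nn k r := by
    intro k
    have : ((m * k : ℕ) : ℝ) ≤ ((∑ r, nn k r : ℕ) : ℝ) := by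
      calc ((m * k : ℕ) : ℝ) = ∑ r, i r * (m * k : ℕ) := by
            rw [← Finset.sum_mul, hsum, one_mul]
        _ ≤ ∑ r, (nn k r : ℝ) := Finset.sum_le_sum fun r _ => Nat.le_ceil _
        _ = _ := by push_cast; rfl
    exact_mod_cast this
  have hnS : ∀ k r, nn k r ≠ 0 → S r := by
    intro k r h
    rcases (hi r).lt_or_eq with h1 | h1
    · exact h1
    · exact absurd (by simp [nn, ← h1]) h
  obtain ⟨M, hM0, hMprod, c, hc1, hc2, hc3, hc4⟩ := tree (F := F) a ha0 ha
    (fun k y y' => ¬ Hazard S (m * k - m) (m * k) (a k) (a (k + 1)) (fun r => toLS (y r))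
      (fun r => toLS (y' r)))
    (fun k y => by
      convert count_safe S a k (m * k - m) (m * k) (by omega) (nn k) (hnn k) (hnS k)
        (fun r => rfl) (ha k) y)
  haveI : ∀ k, NeZero (M k) := fun k => ⟨(hM0 k).ne'⟩
  let dg : ((k : ℕ) → Fin (M k)) → Fin N → ℕ → F := fun ω r j => c ω (j + 1) r j
  have hdg : ∀ ω k r j, j < a k r → dg ω r j = c ω k r j := by
    intro ω k r j hj
    have h1 := hc1 ω (j + 1) r j (lt_of_lt_of_le (Nat.lt_succ_self j) (hka (j + 1) r))
      (max (j + 1) k) (le_max_left _ _)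
    have h2 := hc1 ω k r j hj (max (j + 1) k) (le_max_right _ _)
    simp only [dg]
    rw [← h1, h2]
  let φ : ((k : ℕ) → Fin (M k)) → Fin N → LS F := fun ω r => LS.mk (toLS (dg ω r))
  have hφcont : Continuous φ := by
    apply continuous_pi
    intro r
    rw [continuous_iff_continuousAt]
    intro ω
    rw [ContinuousAt, Metric.tendsto_nhds]
    intro ε hε
    obtain ⟨k, hk⟩ := exists_pow_lt_of_lt_one hε (inv_lt_one_of_one_lt₀ hh)
    have hev : ∀ᶠ ω' in nhds ω, ∀ j ∈ Finset.range k, ω' j = ω j := by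
      rw [Filter.eventually_all_finset]
      intro j _
      exact (continuous_apply j).continuousAt.eventually
        (show ∀ᶠ z in nhds (ω j), z = ω j by rw [nhds_discrete]; simp)
    filter_upwards [hev] with ω' hω'
    refine lt_of_le_of_lt ?_ hk
    have h1 : (Fintype.card F : ℝ)⁻¹ ^ k = (Fintype.card F : ℝ) ^ (-(k : ℤ)) := by
      rw [zpow_neg, zpow_natCast, inv_pow]
    rw [h1, LS.dist_le]
    apply toLS_OGE_sub
    intro j hj
    have hjk := lt_of_lt_of_le hj (hka k r)
    rw [hdg _ k r j hjk, hdg _ k r j hjk,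
      hc4 ω' ω k (fun j hj => hω' j (Finset.mem_range.2 hj))]
  -- all limit points are badly approximable
  have hφbad : ∀ ω, φ ω ∈ badSet F N i := by
    intro ω
    let Z : ℝ := ∑ r, ((2 * m + 1) / i r + 2 * m)
    refine ⟨(Fintype.card F : ℝ) ^ (-Z), Real.rpow_pos_of_pos hh0 _, ?_⟩
    intro q hq p
    by_contra hcon
    push Not at hcon
    set e := q.natDegree with he
    obtain ⟨k, hk1, hk2, hk3⟩ : ∃ k : ℕ, m * k - m ≤ e ∧ e < m * k ∧ 1 ≤ k := by
      refine ⟨e / m + 1, ?_, ?_, Nat.le_add_left _ _⟩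
      · rw [mul_add, mul_one, Nat.add_sub_cancel]
        exact Nat.mul_div_le e m
      · exact Nat.lt_mul_div_succ e (by omega)
    apply hc2 ω k
    refine ⟨fun r => toLS (dg ω r), ?_, ?_, q, p, hq, hk1, hk2, ?_⟩
    · intro r
      exact toLS_OGE_sub _ _ _ fun j hj => hdg ω k r j hj
    · intro r
      exact toLS_OGE_sub _ _ _ fun j hj => hdg ω (k + 1) r j hj
    · intro r hr
      have hr' : 0 < i r := hr
      have h1 := hcon r hr'
      have hqabs : lsAbs F (polyToLS F q) = (Fintype.card F : ℝ) ^ (e : ℝ) := by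
        rw [lsAbs, if_neg (polyToLS_ne_zero q hq), polyToLS_order q hq, neg_neg, zpow_natCast,
          Real.rpow_natCast]
      rw [hqabs, ← Real.rpow_sub hh0] at h1
      rw [← lsAbs_le_iff]
      set L := lsAbs F (polyToLS F q * toLS (dg ω r) - polyToLS F (p r)) with hL
      have hL0 : 0 ≤ L := lsAbs_nonneg F _
      have h1' : L ^ (1 / i r) < (Fintype.card F : ℝ) ^ (-Z - e) := h1
      have h2 : L ≤ (Fintype.card F : ℝ) ^ ((-Z - e) * i r) := by
        have h3 := Real.rpow_le_rpow (Real.rpow_nonneg hL0 _) h1'.le hr'.le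
        rwa [← Real.rpow_mul hL0, one_div_mul_cancel hr'.ne', Real.rpow_one,
          ← Real.rpow_mul hh0.le] at h3
      refine h2.trans ?_
      rw [← Real.rpow_intCast]
      apply Real.rpow_le_rpow_of_exponent_le hh.le
      have hZ : (2 * m + 1) / i r + 2 * m ≤ Z :=
        Finset.single_le_sum (f := fun r => ((2 * m + 1) / i r + 2 * (m : ℝ)))
          (fun s _ => by have := hi s; positivity) (Finset.mem_univ r)
      have hZ2 : (2 * m + 1) + 2 * m * i r ≤ Z * i r := by
        calc (2 * m + 1) + 2 * m * i r = ((2 * m + 1) / i r + 2 * m) * i r := by field_simp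
          _ ≤ Z * i r := by gcongr
      have hsub : ((m * k - m : ℕ) : ℝ) = m * k - m := by
        rw [Nat.cast_sub (by nlinarith)]; push_cast; ring
      have hceil : (nn (k + 1) r : ℝ) < i r * (m * (k + 1)) + 1 := by
        have := Nat.ceil_lt_add_one (a := i r * (m * (k + 1) : ℕ)) (by positivity)
        push_cast at this
        simpa [nn] using this
      have hek : (m : ℝ) * k - m ≤ e := by
        rw [← hsub]; exact_mod_cast hk1
      have hek2 : ((m : ℝ) * k - m) * i r ≤ e * i r := by gcongr
      have hax : ((a (k + 1) r : ℕ) : ℝ) = m * (k + 1) + nn (k + 1) r := by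
        simp only [a]; push_cast; ring
      push_cast
      rw [hsub, hax]
      nlinarith
  -- the measure
  borelize (Fin N → LS F)
  have hφm : Measurable φ := hφcont.measurable
  let μ : Measure (Fin N → LS F) := (prodMeas M).map φ
  have hH : (1 : ℝ) < (Fintype.card F : ℝ) ^ m := one_lt_pow₀ hh (by omega)
  refine mass_distribution μ ((Fintype.card F : ℝ) ^ m) hH d hd0 ?_ (badSet F N i) ?_
  · intro x k
    have hrad : (((Fintype.card F : ℝ) ^ m)⁻¹) ^ k
        = (Fintype.card F : ℝ) ^ (-((m * k : ℕ) : ℤ)) := by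
      rw [zpow_neg, zpow_natCast, inv_pow, ← pow_mul]
    rw [Measure.map_apply hφm Metric.isClosed_closedBall.measurableSet]
    let W : ((r : Fin N) → Fin (nn k r) → F) → Set ((k : ℕ) → Fin (M k)) := fun u =>
      {ω | φ ω ∈ Metric.closedBall x ((((Fintype.card F : ℝ) ^ m)⁻¹) ^ k) ∧
        ∀ r (t : Fin (nn k r)), c ω k r (m * k + t) = u r t}
    have hcov : φ ⁻¹' Metric.closedBall x ((((Fintype.card F : ℝ) ^ m)⁻¹) ^ k) ⊆ ⋃ u, W u := by
      intro ω hω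
      rw [Set.mem_iUnion]
      exact ⟨fun r t => c ω k r (m * k + t), hω, fun r t => rfl⟩
    have hW : ∀ u, prodMeas M (W u) ≤ ((∏ j ∈ Finset.range k, M j : ℕ) : ℝ≥0∞)⁻¹ := by
      intro u
      rcases (W u).eq_empty_or_nonempty with h | ⟨w, hw⟩
      · rw [h]; simp
      rw [← prodMeas_cyl M w k]
      apply measure_mono
      intro ω hω
      apply hc3 ω w k
      intro r j hj
      rcases lt_or_ge j (m * k) with h | h
      · rw [← hdg ω k r j hj, ← hdg w k r j hj]
        have hb : ∀ z, φ z ∈ Metric.closedBall x ((((Fintype.card F : ℝ) ^ m)⁻¹) ^ k) →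
            dg z r j = (x r).get.coeff (j : ℤ) := by
          intro z hz
          rw [Metric.mem_closedBall, dist_pi_le_iff (by positivity)] at hz
          have h1 := hz r
          rw [hrad, LS.dist_le] at h1
          have h2 := h1 j (by exact_mod_cast h)
          rw [HahnSeries.coeff_sub, sub_eq_zero] at h2
          rw [← h2]
          exact (toLS_coeff_nat _ _).symm
        rw [hb ω hω.1, hb w hw.1]
      · have h1 := hω.2 r ⟨j - m * k, by simp only [a] at hj; omega⟩
        have h2 := hw.2 r ⟨j - m * k, by simp only [a] at hj; omega⟩
        have h3 : m * k + (j - m * k) = j := by omega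
        simp only [h3] at h1 h2
        rw [h1, h2]
    set P := ∏ j ∈ Finset.range k, M j with hP
    have hP0 : 0 < P := Finset.prod_pos fun j _ => hM0 j
    have hcard : Fintype.card ((r : Fin N) → Fin (nn k r) → F)
        = Fintype.card F ^ (∑ r, nn k r) := by
      rw [Fintype.card_pi, ← Finset.prod_pow_eq_pow_sum]
      exact Finset.prod_congr rfl fun r _ => by simp
    calc prodMeas M (φ ⁻¹' Metric.closedBall x ((((Fintype.card F : ℝ) ^ m)⁻¹) ^ k))
        ≤ prodMeas M (⋃ u, W u) := measure_mono hcov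
      _ ≤ ∑ u, prodMeas M (W u) := measure_iUnion_fintype_le _ _
      _ ≤ ∑ u : ((r : Fin N) → Fin (nn k r) → F), (P : ℝ≥0∞)⁻¹ :=
          Finset.sum_le_sum fun u _ => hW u
      _ = ((Fintype.card F ^ (∑ r, nn k r) : ℕ) : ℝ≥0∞) * (P : ℝ≥0∞)⁻¹ := by
          rw [Finset.sum_const, Finset.card_univ, nsmul_eq_mul, hcard]
      _ = ENNReal.ofReal ((Fintype.card F : ℝ) ^ (∑ r, nn k r) * (P : ℝ)⁻¹) := by
          rw [ENNReal.ofReal_mul (by positivity), ENNReal.ofReal_inv_of_pos (by exact_mod_cast hP0),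
            ENNReal.ofReal_natCast]
          congr 1
          rw [← ENNReal.ofReal_natCast]
          push_cast
          rfl
      _ ≤ ENNReal.ofReal (((((Fintype.card F : ℝ) ^ m)⁻¹) ^ k) ^ (d : ℝ)) := by
          apply ENNReal.ofReal_le_ofReal
          have hP0' : (0 : ℝ) < P := by exact_mod_cast hP0
          have h1 := hMprod k
          have h2 : ∑ r, a k r = N * (m * k) + ∑ r, nn k r := by
            simp only [a]
            rw [Finset.sum_add_distrib]
            simp
          rw [h2, pow_add] at h1
          have h3 : (Fintype.card F : ℝ) ^ (N * (m * k)) * (Fintype.card F : ℝ) ^ (∑ r, nn k r)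
              ≤ 2 ^ k * P := by exact_mod_cast h1
          have h4 : (2 : ℝ) ^ k ≤ (Fintype.card F : ℝ) ^ k := by
            apply pow_le_pow_left₀ (by norm_num)
            exact_mod_cast hh2
          have hm0 : (m : ℝ) ≠ 0 := by positivity
          have h5 : ((((Fintype.card F : ℝ) ^ m)⁻¹) ^ k) ^ (d : ℝ)
              = (Fintype.card F : ℝ) ^ k * ((Fintype.card F : ℝ) ^ (N * (m * k)))⁻¹ := by
            rw [hrad, ← Real.rpow_intCast, ← Real.rpow_mul hh0.le, ← Real.rpow_natCast,
              ← Real.rpow_natCast, ← Real.rpow_neg hh0.le, ← Real.rpow_add hh0, hd]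
            congr 1
            push_cast
            field_simp
            ring
          rw [h5, ← div_eq_mul_inv, ← div_eq_mul_inv, div_le_div_iff₀ hP0' (by positivity)]
          calc _ = (Fintype.card F : ℝ) ^ (N * (m * k)) * (Fintype.card F : ℝ) ^ (∑ r, nn k r) := by
                ring
            _ ≤ 2 ^ k * P := h3
            _ ≤ _ := by gcongr
      _ = ENNReal.ofReal ((((Fintype.card F : ℝ) ^ m)⁻¹) ^ k) ^ (d : ℝ) := by
          rw [ENNReal.ofReal_rpow_of_nonneg (by positivity) (by positivity)]
  · intro h0
    have h1 := Measure.le_map_apply (μ := prodMeas M) hφm.aemeasurable (badSet F N i)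
    have h2 : φ ⁻¹' (badSet F N i) = Set.univ := Set.eq_univ_of_forall hφbad
    rw [h2, measure_univ] at h1
    have h3 : (prodMeas M).map φ (badSet F N i) = 0 := h0
    rw [h3] at h1
    exact absurd h1 (by simp)

lemma dimH_bad (N : ℕ) (i : Fin N → ℝ) (hi : ∀ r, 0 ≤ i r) (hsum : ∑ r, i r = 1) :
    dimH (badSet F N i) = (N : ℝ≥0∞) := by
  apply le_antisymm ((dimH_mono (Set.subset_univ _)).trans (dimH_univ_le N))
  have hN : 1 ≤ N := by
    rcases Nat.eq_zero_or_pos N with h | h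
    · subst h; simp at hsum
    · exact h
  have hN' : (1 : ℝ) ≤ N := by exact_mod_cast hN
  have hpos : ∀ m : ℕ, 2 ≤ m → (0 : ℝ) < N - 1 / m := by
    intro m hm
    have : (1 : ℝ) / m ≤ 1 / 2 := by
      apply one_div_le_one_div_of_le (by norm_num); exact_mod_cast hm
    linarith
  have hlim : Tendsto (fun m : ℕ => ENNReal.ofReal ((N : ℝ) - 1 / m)) atTop
      (nhds (N : ℝ≥0∞)) := by
    rw [← ENNReal.ofReal_natCast]
    apply ENNReal.tendsto_ofReal
    simpa using tendsto_const_nhds.sub (tendsto_one_div_atTop_nhds_zero_nat (𝕜 := ℝ))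
  apply le_of_tendsto hlim
  filter_upwards [eventually_ge_atTop 2] with m hm
  have h1 := hpos m hm
  exact dimH_bad_ge N i hi hsum m hm (Real.toNNReal ((N : ℝ) - 1 / m))
    (Real.toNNReal_pos.2 h1) (Real.coe_toNNReal _ h1.le)

end Main

end BadLS

/-- Let `𝔽` be a finite field with `h` elements.  For any `N`-tuple of weights
`(i₁, …, i_N)` with `i_r ≥ 0` and `i₁ + ⋯ + i_N = 1`, the set
`Bad_{𝔽((X⁻¹))}(i₁, …, i_N) ⊆ 𝔽((X⁻¹))^N` — the set of `x ∈ 𝔽((X⁻¹))^N` for which there is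
`c > 0` such that for all `q, p₁, …, p_N ∈ 𝔽[X]` with `q ≠ 0`,
`max{‖q x_r - p_r‖^(1/i_r) : i_r > 0} ≥ c ‖q‖⁻¹` — has Hausdorff dimension `N`
(with respect to the sup metric on `𝔽((X⁻¹))^N` induced by the absolute value `‖·‖`). -/
theorem dimH_badLaurentSeries_eq (F : Type*) [Field F] [Fintype F]
    (N : ℕ) (i : Fin N → ℝ) (hi : ∀ r, 0 ≤ i r) (hsum : ∑ r, i r = 1) :
    letI : MetricSpace (LaurentSeries F) := lsMetricSpace F
    dimH {x : Fin N → LaurentSeries F | ∃ c : ℝ, 0 < c ∧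
        ∀ q : Polynomial F, q ≠ 0 → ∀ p : Fin N → Polynomial F,
          ∃ r : Fin N, 0 < i r ∧
            c / lsAbs F (polyToLS F q) ≤
              lsAbs F (polyToLS F q * x r - polyToLS F (p r)) ^ (1 / i r)} =
      (N : ℝ≥0∞) := by
  exact BadLS.dimH_bad (F := F) N i hi hsum
end
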